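/- arXiv:math/0507264 — 4 statements merged into one kernel-verified Lean document; each statement's English description precedes it below -/
import Mathlib

section
/- Let b > 0 and let u, v be real functions that are C² on (0,b) and C¹ on [0,b], with u(t) ≥ v(t) > 0 for all t ∈ (0,b). Assume u(0) = 0 and u'(0) = 0, and assume that either u'(t) > 0 for all t ∈ (0,b) or v'(t) > 0 for all t ∈ (0,b). Assume the main hypothesis: whenever u(t) = v(s) with 0 < t < s < b, one has u''(t) ≤ v''(s). Then u(t) = v(t) for all t ∈ [0,b]. -/
open Set Filter Topology

/-- A function continuous on `(0, x₀]` and asymptotically nonnegative at `0⁺` is nonnegative at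
`x₀ ∈ S` if from every point of the closed set `S` where it is negative one can move to the left
inside `S` while decreasing `H + ε · id`. -/
theorem nonneg_of_exists_left_descent {S : Set ℝ} {H : ℝ → ℝ} {x₀ : ℝ} (hx₀ : 0 < x₀)
    (hS : IsClosed S) (hmem : x₀ ∈ S) (hH : ContinuousOn H (Ioc 0 x₀))
    (hzero : ∀ c < 0, ∃ η > 0, ∀ x ∈ Ioo 0 η, x ≤ x₀ → c < H x)
    (hdesc : ∀ x ∈ Ioc 0 x₀, x ∈ S → H x < 0 → ∀ ε > 0,
      ∃ y ∈ S, 0 < y ∧ y < x ∧ H y + ε * y < H x + ε * x) :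
    0 ≤ H x₀ := by
  by_contra! hneg
  obtain ⟨η, hη, hHη⟩ := hzero (H x₀ / 2) (by linarith)
  obtain ⟨ε, hε, hεx⟩ : ∃ ε > 0, ε * x₀ = -H x₀ / 2 :=
    ⟨-H x₀ / 2 / x₀, by apply div_pos <;> linarith, by field_simp⟩
  have hηx : η ≤ x₀ := by
    by_contra! h
    linarith [hHη x₀ ⟨hx₀, h⟩ le_rfl]
  have hsub : Icc η x₀ ⊆ Ioc 0 x₀ := fun x hx => ⟨hη.trans_le hx.1, hx.2⟩
  have hcl : IsClosed {x ∈ Icc η x₀ | H x + ε * x ≤ H x₀ / 2} :=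
    isClosed_Icc.isClosed_le ((hH.mono hsub).add (by fun_prop)) continuousOn_const
  have hcomp : IsCompact ({x ∈ Icc η x₀ | H x + ε * x ≤ H x₀ / 2} ∩ S) :=
    isCompact_Icc.of_isClosed_subset (hcl.inter hS) fun x hx => hx.1.1
  obtain ⟨x, ⟨⟨hx, hxH⟩, hxS⟩, hmin⟩ :=
    hcomp.exists_isLeast ⟨x₀, ⟨⟨hηx, le_rfl⟩, by linarith⟩, hmem⟩
  have hεpos : 0 < ε * x := mul_pos hε (hsub hx).1
  obtain ⟨y, hyS, hy0, hyx, hyH⟩ := hdesc x (hsub hx) hxS (by linarith) ε hε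
  have hy0' : 0 < ε * y := mul_pos hε hy0
  have hηy : η ≤ y := by
    by_contra! h
    linarith [hHη y ⟨hy0, h⟩ (hyx.le.trans hx.2)]
  exact absurd (hmin ⟨⟨⟨hηy, hyx.le.trans hx.2⟩, by linarith⟩, hyS⟩) (not_le.2 hyx)

theorem HasDerivAt.eventually_nhdsLT_lt {f : ℝ → ℝ} {d x : ℝ} (hf : HasDerivAt f d x)
    (hd : 0 < d) : ∀ᶠ y in 𝓝[<] x, f y < f x := by
  have h := (hasDerivAt_iff_tendsto_slope.1 hf).eventually (eventually_gt_nhds hd)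
  have h' := h.filter_mono (nhdsWithin_mono x fun y (hy : y < x) => hy.ne)
  filter_upwards [h', self_mem_nhdsWithin] with y hy hyx
  rw [slope_def_field] at hy
  have : y - x < 0 := sub_neg.2 hyx
  rcases div_pos_iff.1 hy with h | h
  · linarith [h.2]
  · linarith [h.1]

theorem HasDerivAt.nonneg_of_eventually_nhdsLT_le {f : ℝ → ℝ} {d x : ℝ} (hf : HasDerivAt f d x)
    (h : ∀ᶠ y in 𝓝[<] x, f y ≤ f x) : 0 ≤ d := by
  by_contra! hd
  have h' := hf.neg.eventually_nhdsLT_lt (neg_pos.2 hd)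
  obtain ⟨y, h₁, h₂⟩ := (h.and h').exists
  simp only [Pi.neg_apply] at h₂
  linarith

theorem HasDerivAt.eventually_nhdsLT_add_mul_lt {f : ℝ → ℝ} {d x ε : ℝ} (hf : HasDerivAt f d x)
    (hd : 0 ≤ d) (hε : 0 < ε) : ∀ᶠ y in 𝓝[<] x, f y + ε * y < f x + ε * x :=
  (hf.add ((hasDerivAt_id x).const_mul ε)).eventually_nhdsLT_lt (by linarith)

theorem nonpos_of_deriv_nonpos_of_small {δ δ' : ℝ → ℝ} {c : ℝ}
    (hδ : ∀ x ∈ Ioo 0 c, HasDerivAt δ (δ' x) x) (hδ' : ∀ x ∈ Ioo 0 c, δ' x ≤ 0)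
    (hzero : ∀ ε > 0, ∃ η > 0, ∀ x ∈ Ioo 0 η, x < c → δ x < ε) :
    ∀ x ∈ Ioo 0 c, δ x ≤ 0 := by
  intro x hx
  refine le_of_forall_pos_lt_add fun ε hε => ?_
  obtain ⟨η, hη, h⟩ := hzero ε hε
  have hanti : AntitoneOn δ (Ioo 0 c) := by
    refine antitoneOn_of_deriv_nonpos (convex_Ioo 0 c)
      (fun y hy => (hδ y hy).continuousAt.continuousWithinAt) ?_ ?_
    · rw [interior_Ioo]
      exact fun y hy => (hδ y hy).differentiableAt.differentiableWithinAt
    · rw [interior_Ioo]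
      intro y hy
      rw [(hδ y hy).deriv]
      exact hδ' y hy
  have hm : 0 < min x (η / 2) := lt_min hx.1 (by linarith)
  have hmc : min x (η / 2) < c := (min_le_left _ _).trans_lt hx.2
  have := hanti ⟨hm, hmc⟩ hx (min_le_left _ _)
  have := h _ ⟨hm, (min_le_right _ _).trans_lt (by linarith)⟩ hmc
  linarith

/-- A `C²` function on `(0, b)` with positive derivative has a differentiable left inverse. -/
theorem exists_leftInverse_hasDerivAt {g : ℝ → ℝ} {b : ℝ} (hg : ContDiffOn ℝ 2 g (Ioo 0 b))
    (hpos : ∀ t ∈ Ioo 0 b, 0 < deriv g t) :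
    ∃ φ : ℝ → ℝ, ∀ x ∈ Ioo 0 b, φ (g x) = x ∧ HasDerivAt φ (deriv g x)⁻¹ (g x) := by
  have hmono : StrictMonoOn g (Ioo 0 b) :=
    strictMonoOn_of_deriv_pos (convex_Ioo 0 b) hg.continuousOn (by rwa [interior_Ioo])
  have hinv := hmono.injOn.leftInvOn_invFunOn
  refine ⟨Function.invFunOn g (Ioo 0 b), fun x hx => ⟨hinv hx, ?_⟩⟩
  have hnhds := Ioo_mem_nhds hx.1 hx.2
  refine (((hg.contDiffAt hnhds).hasStrictDerivAt (by norm_num)).to_local_left_inverse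
    (hpos x hx).ne' ?_).hasDerivAt
  filter_upwards [hnhds] with y hy using hinv hy

theorem ContDiffOn.hasDerivAt_deriv_of_isOpen {f : ℝ → ℝ} {s : Set ℝ} (hf : ContDiffOn ℝ 2 f s)
    (hs : IsOpen s) {x : ℝ} (hx : x ∈ s) : HasDerivAt (deriv f) (deriv (deriv f) x) x := by
  have h : ContDiffOn ℝ 1 (deriv f) s := hf.deriv_of_isOpen hs (by norm_num)
  exact ((h.contDiffAt (hs.mem_nhds hx)).differentiableAt (by norm_num)).hasDerivAt

theorem ContDiffOn.hasDerivAt_of_isOpen {f : ℝ → ℝ} {s : Set ℝ} (hf : ContDiffOn ℝ 2 f s)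
    (hs : IsOpen s) {x : ℝ} (hx : x ∈ s) : HasDerivAt f (deriv f x) x :=
  ((hf.contDiffAt (hs.mem_nhds hx)).differentiableAt (by norm_num)).hasDerivAt

theorem deriv_eq_of_le_of_eq {u v : ℝ → ℝ} {s : Set ℝ} {x : ℝ} (hs : s ∈ 𝓝 x)
    (hle : ∀ t ∈ s, v t ≤ u t) (hu : DifferentiableAt ℝ u x) (hv : DifferentiableAt ℝ v x)
    (hx : u x = v x) : deriv u x = deriv v x := by
  have hmin : IsLocalMin (fun t => u t - v t) x := by
    filter_upwards [hs] with t ht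
    linarith [hle t ht]
  have := hmin.hasDerivAt_eq_zero (hu.hasDerivAt.sub hv.hasDerivAt)
  linarith

/-- A `C¹` function on `[0, b]` with vanishing derivative at `0` has small derivative near `0`. -/
theorem exists_forall_deriv_sq_lt {u : ℝ → ℝ} {b : ℝ} (hb : 0 < b)
    (hu : ContDiffOn ℝ 1 u (Icc 0 b)) (h0 : derivWithin u (Icc 0 b) 0 = 0) {c : ℝ} (hc : 0 < c) :
    ∃ η > 0, ∀ t ∈ Ioo 0 η, t < b → deriv u t ^ 2 < c := by
  have hcont := (hu.continuousOn_derivWithin (uniqueDiffOn_Icc hb) le_rfl).pow 2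
  have h := (hcont 0 ⟨le_rfl, hb.le⟩).eventually (eventually_lt_nhds (b := c) (by simpa [h0] using hc))
  obtain ⟨η, hη, hball⟩ := Metric.mem_nhdsWithin_iff.1 h
  refine ⟨η, hη, fun t ht htb => ?_⟩
  have := hball ⟨by simpa [abs_of_pos ht.1] using ht.2, ht.1.le, htb.le⟩
  simpa [derivWithin_of_mem_nhds (Icc_mem_nhds ht.1 htb)] using this

/-- The comparison theorem when the larger function is increasing: here `u ∘ τ = v`. -/
theorem eqOn_of_deriv_pos_left {b : ℝ} {u v : ℝ → ℝ}
    (hu2 : ContDiffOn ℝ 2 u (Ioo 0 b)) (hv2 : ContDiffOn ℝ 2 v (Ioo 0 b))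
    (huc : ContinuousOn u (Icc 0 b)) (hvc : ContinuousOn v (Icc 0 b))
    (huv : ∀ t ∈ Ioo 0 b, 0 < v t ∧ v t ≤ u t) (hu0 : u 0 = 0) (hv0 : v 0 = 0)
    (hsmall : ∀ c > 0, ∃ η > 0, ∀ t ∈ Ioo 0 η, t < b → deriv u t ^ 2 < c)
    (hpos : ∀ t ∈ Ioo 0 b, 0 < deriv u t)
    (hmain : ∀ t s : ℝ, 0 < t → t < s → s < b → u t = v s →
      deriv (deriv u) t ≤ deriv (deriv v) s) :
    EqOn u v (Ioo 0 b) := by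
  obtain ⟨φ, hφ⟩ := exists_leftInverse_hasDerivAt hu2 hpos
  obtain ⟨τ, hτdef⟩ : ∃ τ : ℝ → ℝ, τ = φ ∘ v := ⟨_, rfl⟩
  have hτ : ∀ s ∈ Ioo 0 b, (0 < τ s ∧ τ s ≤ s) ∧ u (τ s) = v s ∧
      HasDerivAt τ ((deriv u (τ s))⁻¹ * deriv v s) s := by
    intro s hs
    obtain ⟨t, ht, hts⟩ := intermediate_value_Icc hs.1.le
      (huc.mono (Icc_subset_Icc_right hs.2.le)) (show v s ∈ Icc (u 0) (u s) by
        rw [hu0]; exact ⟨(huv s hs).1.le, (huv s hs).2⟩)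
    have ht0 : 0 < t := by
      refine ht.1.lt_of_ne fun h => ?_
      have := (huv s hs).1
      rw [← hts, ← h, hu0] at this
      exact this.false
    obtain ⟨h₁, h₂⟩ := hφ t ⟨ht0, ht.2.trans_lt hs.2⟩
    have hτs : τ s = t := by rw [hτdef, Function.comp_apply, ← hts, h₁]
    rw [hτs]
    refine ⟨⟨ht0, ht.2⟩, hts, ?_⟩
    rw [hts] at h₂
    rw [hτdef]
    exact h₂.comp s (hv2.hasDerivAt_of_isOpen isOpen_Ioo hs)
  have hτmem : ∀ s ∈ Ioo 0 b, τ s ∈ Ioo 0 b := fun s hs =>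
    ⟨(hτ s hs).1.1, (hτ s hs).1.2.trans_lt hs.2⟩
  have hHderiv : ∀ s ∈ Ioo 0 b,
      HasDerivAt (fun s => deriv v s ^ 2 - deriv u (τ s) ^ 2)
        (2 * deriv v s * (deriv (deriv v) s - deriv (deriv u) (τ s))) s := by
    intro s hs
    have h₁ := (hv2.hasDerivAt_deriv_of_isOpen isOpen_Ioo hs).pow 2
    have h₂ := ((hu2.hasDerivAt_deriv_of_isOpen isOpen_Ioo (hτmem s hs)).comp s
      (hτ s hs).2.2).pow 2
    have hne := (hpos _ (hτmem s hs)).ne'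
    refine (h₁.sub h₂).congr_deriv ?_
    simp only [Function.comp_apply]
    field_simp
    ring
  have hrec : ∀ s₀ ∈ Ioo 0 b, (∀ z ∈ Icc 0 s₀, v z ≤ v s₀) → deriv u (τ s₀) ≤ deriv v s₀ := by
    intro s₀ hs₀ hmax
    have hvc₀ : ContinuousOn v (Icc 0 s₀) := hvc.mono (Icc_subset_Icc_right hs₀.2.le)
    have hIoc : Ioc 0 s₀ ⊆ Ioo 0 b := fun x hx => ⟨hx.1, hx.2.trans_lt hs₀.2⟩
    have hderiv_nonneg : ∀ x ∈ Ioc 0 s₀, (∀ z ∈ Icc 0 x, v z ≤ v x) → 0 ≤ deriv v x := by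
      intro x hx hxm
      refine (hv2.hasDerivAt_of_isOpen isOpen_Ioo (hIoc hx)).nonneg_of_eventually_nhdsLT_le ?_
      filter_upwards [Ioo_mem_nhdsLT hx.1] with y hy using hxm y ⟨hy.1.le, hy.2.le⟩
    have hS : {x ∈ Icc 0 s₀ | ∀ z ∈ Icc 0 x, v z ≤ v x} =
        ⋂ z ∈ Icc 0 s₀, {x ∈ Icc 0 s₀ | v (min x z) ≤ v x} := by
      ext x
      simp only [mem_ofPred_eq, mem_iInter]
      constructor
      · rintro ⟨hx, h⟩ z hz
        exact ⟨hx, h _ ⟨le_min hx.1 hz.1, min_le_left _ _⟩⟩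
      · intro h
        have hx := (h 0 ⟨le_rfl, hs₀.1.le⟩).1
        refine ⟨hx, fun z hz => ?_⟩
        simpa [min_eq_right hz.2] using (h z ⟨hz.1, hz.2.trans hx.2⟩).2
    have hnonneg := nonneg_of_exists_left_descent
      (S := {x ∈ Icc 0 s₀ | ∀ z ∈ Icc 0 x, v z ≤ v x}) hs₀.1
      (by
        rw [hS]
        refine isClosed_biInter fun z hz => isClosed_Icc.isClosed_le ?_ hvc₀
        exact hvc₀.comp (by fun_prop) fun x hx =>
          ⟨le_min hx.1 hz.1, (min_le_left _ _).trans hx.2⟩)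
      ⟨⟨hs₀.1.le, le_rfl⟩, hmax⟩
      (fun x hx => (hHderiv x (hIoc hx)).continuousAt.continuousWithinAt)
      (by
        intro c hc
        obtain ⟨η, hη, h⟩ := hsmall (-c) (by linarith)
        refine ⟨η, hη, fun x hx hxs => ?_⟩
        have hxb := hIoc ⟨hx.1, hxs⟩
        have := h (τ x) ⟨(hτmem x hxb).1, (hτ x hxb).1.2.trans_lt hx.2⟩ (hτmem x hxb).2
        nlinarith [sq_nonneg (deriv v x)])
      (by
        rintro x hx ⟨-, hxm⟩ hHx ε hε
        have hxb := hIoc hx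
        by_cases hjump : ∃ y ∈ Ico 0 x, v y = v x
        · obtain ⟨y, hy, hyx⟩ := hjump
          have hy0 : 0 < y := by
            refine hy.1.lt_of_ne fun h => ?_
            have := (huv x hxb).1
            rw [← hyx, ← h, hv0] at this
            exact this.false
          have hyb : y ∈ Ioo 0 b := ⟨hy0, hy.2.trans hxb.2⟩
          have hloc : IsLocalMax v y := by
            filter_upwards [Ioo_mem_nhds hy0 hy.2] with z hz
            rw [hyx]
            exact hxm z ⟨hz.1.le, hz.2.le⟩
          have hτy : τ y = τ x := by simp [hτdef, hyx]
          refine ⟨y, ⟨⟨hy.1, hy.2.le.trans hx.2⟩, fun z hz => ?_⟩, hy0, hy.2, ?_⟩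
          · rw [hyx]
            exact hxm z ⟨hz.1, hz.2.trans hy.2.le⟩
          · simp only [hτy, hloc.deriv_eq_zero]
            nlinarith [sq_nonneg (deriv v x), mul_lt_mul_of_pos_left hy.2 hε]
        · push Not at hjump
          have hτlt : τ x < x := by
            refine (hτ x hxb).1.2.lt_of_ne fun h => ?_
            have heq := (hτ x hxb).2.1
            rw [h] at heq
            have := deriv_eq_of_le_of_eq (isOpen_Ioo.mem_nhds hxb) (fun t ht => (huv t ht).2)
              (hu2.hasDerivAt_of_isOpen isOpen_Ioo hxb).differentiableAt
              (hv2.hasDerivAt_of_isOpen isOpen_Ioo hxb).differentiableAt heq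
            simp [h, this] at hHx
          have hd := (hHderiv x hxb).eventually_nhdsLT_add_mul_lt (mul_nonneg
            (mul_nonneg zero_le_two (hderiv_nonneg x hx hxm)) (sub_nonneg.2 (hmain _ _
              (hτmem x hxb).1 hτlt hxb.2 (hτ x hxb).2.1))) hε
          obtain ⟨l, hl, hld⟩ := (mem_nhdsLT_iff_exists_Ioo_subset' hx.1).1 hd
          have hl0 : max l 0 < x := max_lt hl hx.1
          obtain ⟨z, hz, hzmax⟩ := isCompact_Icc.exists_isMaxOn
            (nonempty_Icc.2 (le_max_right l 0))
            (hvc₀.mono (Icc_subset_Icc_right (hl0.le.trans hx.2)))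
          have hzx : v z < v x := (hxm z ⟨hz.1, hz.2.trans hl0.le⟩).lt_of_ne
            (hjump z ⟨hz.1, hz.2.trans_lt hl0⟩)
          have hvx := (hv2.hasDerivAt_of_isOpen isOpen_Ioo hxb).continuousAt
          obtain ⟨r, hzr, hr⟩ := (((hvx.eventually (lt_mem_nhds hzx)).filter_mono
            nhdsWithin_le_nhds).and (Ioo_mem_nhdsLT hl0)).exists
          have hr0 : 0 < r := (le_max_right l 0).trans_lt hr.1
          obtain ⟨y, hy, hymax⟩ := isCompact_Icc.exists_isMaxOn (nonempty_Icc.2 hr0.le)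
            (hvc₀.mono (Icc_subset_Icc_right (hr.2.le.trans hx.2)))
          have hry : v r ≤ v y := hymax ⟨hr0.le, le_rfl⟩
          have hly : max l 0 < y := by
            by_contra! h
            have : v y ≤ v z := hzmax ⟨hy.1, h⟩
            linarith
          have hyx : y < x := hy.2.trans_lt hr.2
          exact ⟨y, ⟨⟨hy.1, hyx.le.trans hx.2⟩, fun w hw => hymax ⟨hw.1, hw.2.trans hy.2⟩⟩,
            (le_max_right l 0).trans_lt hly, hyx, hld ⟨(le_max_left l 0).trans_lt hly, hyx⟩⟩)
    have h₁ := hderiv_nonneg s₀ ⟨hs₀.1, le_rfl⟩ hmax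
    exact abs_le_of_sq_le_sq' (by linarith) h₁ |>.2
  have hall : ∀ s ∈ Ioo 0 b, deriv u (τ s) ≤ deriv v s := by
    intro s hs
    obtain ⟨y, hy, hymax⟩ := isCompact_Icc.exists_isMaxOn (nonempty_Icc.2 hs.1.le)
      (hvc.mono (Icc_subset_Icc_right hs.2.le))
    have hsy : v s ≤ v y := hymax ⟨hs.1.le, le_rfl⟩
    have hy0 : 0 < y := by
      refine hy.1.lt_of_ne fun h => ?_
      rw [← h, hv0] at hsy
      linarith [(huv s hs).1]
    have hyb : y ∈ Ioo 0 b := ⟨hy0, hy.2.trans_lt hs.2⟩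
    have hyr := hrec y hyb fun z hz => hymax ⟨hz.1, hz.2.trans hy.2⟩
    rcases hy.2.eq_or_lt with h | h
    · rwa [← h]
    · have hloc : IsLocalMax v y := hymax.isLocalMax (Icc_mem_nhds hy0 h)
      rw [hloc.deriv_eq_zero] at hyr
      linarith [hpos _ (hτmem y hyb)]
  have hδ := nonpos_of_deriv_nonpos_of_small (c := b) (δ := fun s => s - τ s)
    (fun s hs => (hasDerivAt_id s).sub (hτ s hs).2.2)
    (fun s hs => by
      have hp := hpos _ (hτmem s hs)
      rw [sub_nonpos, inv_mul_eq_div, one_le_div hp]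
      exact hall s hs)
    (fun ε hε => ⟨ε, hε, fun x hx hxb => by
      linarith [hx.2, (hτmem x ⟨hx.1, hxb⟩).1]⟩)
  intro s hs
  have hts : τ s = s := le_antisymm (hτ s hs).1.2 (by linarith [hδ s hs])
  have := (hτ s hs).2.1
  rwa [hts] at this

/-- The comparison theorem when the smaller function is increasing, up to the first time the larger
function reaches the level `v b`: here `v ∘ σ = u`. -/
theorem eqOn_of_deriv_pos_right {b c : ℝ} {u v : ℝ → ℝ} (hcb : c ≤ b)
    (hu2 : ContDiffOn ℝ 2 u (Ioo 0 b)) (hv2 : ContDiffOn ℝ 2 v (Ioo 0 b))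
    (huc : ContinuousOn u (Icc 0 b)) (hvc : ContinuousOn v (Icc 0 b))
    (huv : ∀ t ∈ Ioo 0 b, 0 < v t ∧ v t ≤ u t) (hu0 : u 0 = 0)
    (hsmall : ∀ c > 0, ∃ η > 0, ∀ t ∈ Ioo 0 η, t < b → deriv u t ^ 2 < c)
    (hpos : ∀ t ∈ Ioo 0 b, 0 < deriv v t) (hlt : ∀ t ∈ Ioo 0 c, u t < v b)
    (hmain : ∀ t s : ℝ, 0 < t → t < s → s < b → u t = v s →
      deriv (deriv u) t ≤ deriv (deriv v) s) :
    EqOn u v (Ioo 0 c) := by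
  obtain ⟨φ, hφ⟩ := exists_leftInverse_hasDerivAt hv2 hpos
  obtain ⟨σ, hσdef⟩ : ∃ σ : ℝ → ℝ, σ = φ ∘ u := ⟨_, rfl⟩
  have hsub : Ioo 0 c ⊆ Ioo 0 b := Ioo_subset_Ioo_right hcb
  have hσ : ∀ t ∈ Ioo 0 c, (t ≤ σ t ∧ σ t < b) ∧ v (σ t) = u t ∧
      HasDerivAt σ ((deriv v (σ t))⁻¹ * deriv u t) t := by
    intro t ht
    have htb := hsub ht
    obtain ⟨s, hs, hst⟩ := intermediate_value_Icc htb.2.le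
      (hvc.mono (Icc_subset_Icc_left ht.1.le)) ⟨(huv t htb).2, (hlt t ht).le⟩
    have hsb : s < b := by
      refine hs.2.lt_of_ne fun h => ?_
      have := hlt t ht
      rw [← hst, h] at this
      exact this.false
    obtain ⟨h₁, h₂⟩ := hφ s ⟨ht.1.trans_le hs.1, hsb⟩
    have hσt : σ t = s := by rw [hσdef, Function.comp_apply, ← hst, h₁]
    rw [hσt]
    refine ⟨⟨hs.1, hsb⟩, hst, ?_⟩
    rw [hst] at h₂
    rw [hσdef]
    exact h₂.comp t (hu2.hasDerivAt_of_isOpen isOpen_Ioo htb)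
  have hσmem : ∀ t ∈ Ioo 0 c, σ t ∈ Ioo 0 b := fun t ht =>
    ⟨ht.1.trans_le (hσ t ht).1.1, (hσ t ht).1.2⟩
  have hHderiv : ∀ t ∈ Ioo 0 c,
      HasDerivAt (fun t => deriv v (σ t) ^ 2 - deriv u t ^ 2)
        (2 * deriv u t * (deriv (deriv v) (σ t) - deriv (deriv u) t)) t := by
    intro t ht
    have h₁ := (hu2.hasDerivAt_deriv_of_isOpen isOpen_Ioo (hsub ht)).pow 2
    have h₂ := ((hv2.hasDerivAt_deriv_of_isOpen isOpen_Ioo (hσmem t ht)).comp t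
      (hσ t ht).2.2).pow 2
    have hne := (hpos _ (hσmem t ht)).ne'
    refine (h₂.sub h₁).congr_deriv ?_
    simp only [Function.comp_apply]
    field_simp
    ring
  have hall : ∀ t ∈ Ioo 0 c, deriv u t ≤ deriv v (σ t) := by
    intro t₀ ht₀
    by_cases hut₀ : deriv u t₀ ≤ 0
    · exact hut₀.trans (hpos _ (hσmem t₀ ht₀)).le
    push Not at hut₀
    have huc₀ : ContinuousOn u (Icc 0 t₀) :=
      huc.mono (Icc_subset_Icc_right (hsub ht₀).2.le)
    have hIoc : Ioc 0 t₀ ⊆ Ioo 0 c := fun x hx => ⟨hx.1, hx.2.trans_lt ht₀.2⟩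
    have hS : {x ∈ Icc 0 t₀ | ∀ z ∈ Icc x t₀, u x ≤ u z} =
        ⋂ z ∈ Icc 0 t₀, {x ∈ Icc 0 t₀ | u x ≤ u (max x z)} := by
      ext x
      simp only [mem_ofPred_eq, mem_iInter]
      constructor
      · rintro ⟨hx, h⟩ z hz
        exact ⟨hx, h _ ⟨le_max_left _ _, max_le hx.2 hz.2⟩⟩
      · intro h
        have hx := (h 0 ⟨le_rfl, ht₀.1.le⟩).1
        refine ⟨hx, fun z hz => ?_⟩
        simpa [max_eq_right hz.1] using (h z ⟨hx.1.trans hz.1, hz.2⟩).2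
    have hnonneg := nonneg_of_exists_left_descent
      (S := {x ∈ Icc 0 t₀ | ∀ z ∈ Icc x t₀, u x ≤ u z}) ht₀.1
      (by
        rw [hS]
        refine isClosed_biInter fun z hz => isClosed_Icc.isClosed_le huc₀ ?_
        exact huc₀.comp (by fun_prop) fun x hx =>
          ⟨hx.1.trans (le_max_left _ _), max_le hx.2 hz.2⟩)
      ⟨⟨ht₀.1.le, le_rfl⟩, fun z hz => by rw [le_antisymm hz.2 hz.1]⟩
      (fun x hx => (hHderiv x (hIoc hx)).continuousAt.continuousWithinAt)
      (by
        intro e he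
        obtain ⟨η, hη, h⟩ := hsmall (-e) (by linarith)
        refine ⟨η, hη, fun x hx hxs => ?_⟩
        have := h x hx (hsub (hIoc ⟨hx.1, hxs⟩)).2
        nlinarith [sq_nonneg (deriv v (σ x))])
      (by
        rintro x hx ⟨-, hxm⟩ hHx ε hε
        have hxc := hIoc hx
        have hxb := hsub hxc
        have hux := hu2.hasDerivAt_of_isOpen isOpen_Ioo hxb
        have hux0 : 0 ≤ deriv u x := by
          rcases hx.2.eq_or_lt with h | h
          · rw [h]; exact hut₀.le
          by_contra! hneg
          have hev : ∀ᶠ y in 𝓝[>] x, u y < u x := by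
            have h' := (hasDerivAt_iff_tendsto_slope.1 hux).eventually (eventually_lt_nhds hneg)
            filter_upwards [h'.filter_mono (nhdsWithin_mono x fun y (hy : x < y) => hy.ne'),
              self_mem_nhdsWithin] with y hy hyx
            rw [slope_def_field, div_lt_iff₀ (sub_pos.2 hyx)] at hy
            linarith
          obtain ⟨y, hy, hyx⟩ := (hev.and (Ioo_mem_nhdsGT h)).exists
          linarith [hxm y ⟨hyx.1.le, hyx.2.le⟩]
        have huxpos : 0 < deriv u x := by
          refine hux0.lt_of_ne fun h => ?_
          simp only [← h] at hHx
          nlinarith [sq_nonneg (deriv v (σ x))]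
        have hlts : x < σ x := by
          refine (hσ x hxc).1.1.lt_of_ne fun h => ?_
          have heq := (hσ x hxc).2.1
          rw [← h] at heq
          have := deriv_eq_of_le_of_eq (isOpen_Ioo.mem_nhds hxb) (fun t ht => (huv t ht).2)
            hux.differentiableAt
            (hv2.hasDerivAt_of_isOpen isOpen_Ioo hxb).differentiableAt heq.symm
          simp [← h, this] at hHx
        have hd := (hHderiv x hxc).eventually_nhdsLT_add_mul_lt (mul_nonneg
          (mul_nonneg zero_le_two hux0) (sub_nonneg.2 (hmain _ _
            hx.1 hlts (hσmem x hxc).2 (hσ x hxc).2.1.symm))) hε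
        obtain ⟨l, hl, hld⟩ := (mem_nhdsLT_iff_exists_Ioo_subset' hx.1).1 hd
        obtain ⟨r, hr, hrl⟩ := ((hux.eventually_nhdsLT_lt huxpos).and
          (Ioo_mem_nhdsLT (max_lt hl hx.1))).exists
        have hr0 : 0 < r := (le_max_right l 0).trans_lt hrl.1
        have hrt : r ≤ t₀ := hrl.2.le.trans hx.2
        obtain ⟨y, hy, hymin⟩ := isCompact_Icc.exists_isMinOn (nonempty_Icc.2 hrt)
          (huc₀.mono (Icc_subset_Icc_left hr0.le))
        have hyr : u y ≤ u r := hymin ⟨le_rfl, hrt⟩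
        have hyx : y < x := by
          by_contra! h
          linarith [hxm y ⟨h, hy.2⟩]
        exact ⟨y, ⟨⟨hr0.le.trans hy.1, hy.2⟩, fun z hz => hymin ⟨hy.1.trans hz.1, hz.2⟩⟩,
          hr0.trans_le hy.1, hyx,
          hld ⟨((le_max_left l 0).trans_lt hrl.1).trans_le hy.1, hyx⟩⟩)
    exact abs_le_of_sq_le_sq' (by linarith) (hpos _ (hσmem t₀ ht₀)).le |>.2
  have hmono : StrictMonoOn v (Ioo 0 b) :=
    strictMonoOn_of_deriv_pos (convex_Ioo 0 b) hv2.continuousOn (by rwa [interior_Ioo])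
  have hδ := nonpos_of_deriv_nonpos_of_small (c := c) (δ := fun t => σ t - t)
    (fun t ht => (hσ t ht).2.2.sub (hasDerivAt_id t))
    (fun t ht => by
      have hp := hpos _ (hσmem t ht)
      rw [sub_nonpos, inv_mul_eq_div, div_le_one hp]
      exact hall t ht)
    (fun ε hε => by
      rcases le_or_gt b ε with hbε | hεb
      · exact ⟨1, one_pos, fun x hx hxc => by
          linarith [hx.1, (hσmem x ⟨hx.1, hxc⟩).2]⟩
      have hεm : ε ∈ Ioo 0 b := ⟨hε, hεb⟩
      have h := (huc 0 ⟨le_rfl, hε.le.trans hεb.le⟩).eventually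
        (eventually_lt_nhds (b := v ε) (by rw [hu0]; exact (huv ε hεm).1))
      obtain ⟨η, hη, hball⟩ := Metric.mem_nhdsWithin_iff.1 h
      refine ⟨η, hη, fun x hx hxc => ?_⟩
      have hxm : x ∈ Ioo 0 c := ⟨hx.1, hxc⟩
      have hux : u x < v ε :=
        hball ⟨by simpa [abs_of_pos hx.1] using hx.2, hx.1.le, (hsub hxm).2.le⟩
      rw [← (hσ x hxm).2.1] at hux
      have := (hmono.lt_iff_lt (hσmem x hxm) hεm).1 hux
      linarith [hx.1])
  intro t ht
  have hts : σ t = t := le_antisymm (by linarith [hδ t ht]) (hσ t ht).1.1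
  have := (hσ t ht).2.1
  rw [hts] at this
  exact this.symm

/-- Theorem 2.1 of Li–Nirenberg, "A geometric problem and the Hopf Lemma. I". -/
theorem stmt_0 (b : ℝ) (hb : 0 < b) (u v : ℝ → ℝ)
    (hu2 : ContDiffOn ℝ 2 u (Set.Ioo 0 b)) (hv2 : ContDiffOn ℝ 2 v (Set.Ioo 0 b))
    (hu1 : ContDiffOn ℝ 1 u (Set.Icc 0 b)) (hv1 : ContDiffOn ℝ 1 v (Set.Icc 0 b))
    (huv : ∀ t ∈ Set.Ioo 0 b, 0 < v t ∧ v t ≤ u t)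
    (hu0 : u 0 = 0) (hu'0 : derivWithin u (Set.Icc 0 b) 0 = 0)
    (hmono : (∀ t ∈ Set.Ioo 0 b, 0 < deriv u t) ∨ (∀ t ∈ Set.Ioo 0 b, 0 < deriv v t))
    (hmain : ∀ t s : ℝ, 0 < t → t < s → s < b → u t = v s →
      deriv (deriv u) t ≤ deriv (deriv v) s) :
    ∀ t ∈ Set.Icc 0 b, u t = v t := by
  have huc := hu1.continuousOn
  have hvc := hv1.continuousOn
  have hclosure : closure (Ioo 0 b) = Icc 0 b := closure_Ioo hb.ne
  have hsmall : ∀ c > 0, ∃ η > 0, ∀ t ∈ Ioo 0 η, t < b → deriv u t ^ 2 < c :=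
    fun c hc => exists_forall_deriv_sq_lt hb hu1 hu'0 hc
  suffices h : EqOn u v (Ioo 0 b) from
    h.of_subset_closure huc hvc Ioo_subset_Icc_self hclosure.ge
  rcases hmono with hpos | hpos
  · have h0 : (0 : ℝ) ∈ closure (Ioo 0 b) := hclosure ▸ ⟨le_rfl, hb.le⟩
    have hu0c := (huc 0 ⟨le_rfl, hb.le⟩).mono (Ioo_subset_Icc_self (a := 0) (b := b))
    have hv0c := (hvc 0 ⟨le_rfl, hb.le⟩).mono (Ioo_subset_Icc_self (a := 0) (b := b))
    have hv0 : v 0 = 0 := le_antisymm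
      ((hv0c.closure_le h0 hu0c fun t ht => (huv t ht).2).trans_eq hu0)
      (continuousWithinAt_const.closure_le h0 hv0c fun t ht => (huv t ht).1.le)
    exact eqOn_of_deriv_pos_left hu2 hv2 huc hvc huv hu0 hv0 hsmall hpos hmain
  · have hmonoIcc : StrictMonoOn v (Icc 0 b) :=
      strictMonoOn_of_deriv_pos (convex_Icc 0 b) hvc (by rwa [interior_Icc])
    have hbmem : b ∈ Icc 0 b := ⟨hb.le, le_rfl⟩
    refine eqOn_of_deriv_pos_right le_rfl hu2 hv2 huc hvc huv hu0 hsmall hpos ?_ hmain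
    by_contra! hex
    obtain ⟨t, ht, hvt⟩ := hex
    have hsub : Icc 0 t ⊆ Icc 0 b := Icc_subset_Icc_right ht.2.le
    have hcomp : IsCompact {x ∈ Icc 0 t | v b ≤ u x} :=
      isCompact_Icc.of_isClosed_subset
        (isClosed_Icc.isClosed_le continuousOn_const (huc.mono hsub)) fun x hx => hx.1
    obtain ⟨c, ⟨hc, hvc'⟩, hleast⟩ := hcomp.exists_isLeast ⟨t, ⟨ht.1.le, le_rfl⟩, hvt⟩
    have hcb : c < b := hc.2.trans_lt ht.2
    have hvbpos : 0 < v b := (huv t ht).1.trans (hmonoIcc ⟨ht.1.le, ht.2.le⟩ hbmem ht.2)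
    have hc0 : 0 < c := by
      refine hc.1.lt_of_ne fun h => ?_
      rw [← h, hu0] at hvc'
      linarith
    have heq : EqOn u v (Ioo 0 c) := by
      refine eqOn_of_deriv_pos_right hcb.le hu2 hv2 huc hvc huv hu0 hsmall hpos ?_ hmain
      intro x hx
      by_contra! h
      exact absurd (hleast ⟨⟨hx.1.le, hx.2.le.trans hc.2⟩, h⟩) (not_le.2 hx.2)
    have hcsub : Icc 0 c ⊆ Icc 0 b := Icc_subset_Icc_right hcb.le
    have huvc := heq.of_subset_closure (huc.mono hcsub) (hvc.mono hcsub) Ioo_subset_Icc_self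
      (closure_Ioo hc0.ne).ge ⟨hc.1, le_rfl⟩
    have := hmonoIcc ⟨hc.1, hcb.le⟩ hbmem hcb
    linarith
end

section
/- Let a < b and α < β be real numbers. Let u be C² on (a,b) and C¹ on [a,b], with u'(b) = 0 and u(a) > u(t) > u(b) for all t ∈ (a,b). Let v be C² on (α,β) and C¹ on [α,β], with v'(β) = 0, v'(s) > 0 for all s ∈ (α,β), v(α) ≤ u(b), and v(β) = u(a). Suppose that whenever u(t) = v(s) for some t ∈ (a,b) and s ∈ (α,β), one has u''(t) ≤ v''(s). Then β − α = b − a and v(s) = u(a + β − s) for all s ∈ [α,β]; in particular v is a reflection of u and v(α) = u(b). -/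
open Set Filter Topology

/-- A quantity `e` that has nonnegative derivative at the running minima of `u`, and does not
decrease between two running minima at the same level, does not decrease along running minima. -/
theorem le_of_deriv_nonneg_at_running_minima {a q : ℝ} (haq : a < q) {u e : ℝ → ℝ}
    (hu : ContinuousOn u (Icc a q)) (he : ContinuousOn e (Icc a q))
    (hq : ∀ x ∈ Icc a q, u q ≤ u x)
    (hderiv : ∀ t ∈ Ioc a q, (∀ x ∈ Icc a t, u t ≤ u x) → ∃ d, 0 ≤ d ∧ HasDerivAt e d t)
    (hlevel : ∀ x ∈ Icc a q, ∀ t ∈ Icc a q, x < t → (∀ z ∈ Icc a t, u t ≤ u z) →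
      u x = u t → e x ≤ e t) :
    e a ≤ e q := by
  by_contra! hlt
  obtain ⟨ε, hε, hεlt⟩ : ∃ ε, 0 < ε ∧ e q + ε * (q - a) < e a := by
    have hpos : 0 < q - a := sub_pos.2 haq
    refine ⟨(e a - e q) / (2 * (q - a)), div_pos (by linarith) (by linarith), ?_⟩
    have : (e a - e q) / (2 * (q - a)) * (q - a) = (e a - e q) / 2 := by field_simp
    linarith
  -- the first running minimum at which `e` lies below a line of slope `-ε` through `q`
  let W : Set ℝ := {t ∈ Icc a q | (∀ x ∈ Icc a q, x ≤ t → u t ≤ u x) ∧ e t ≤ e q + ε * (q - t)}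
  have hWne : W.Nonempty := ⟨q, right_mem_Icc.2 haq.le, fun x hx _ => hq x hx, by simp⟩
  have hWbdd : BddBelow W := ⟨a, fun t ht => ht.1.1⟩
  have hWclosed : IsClosed W := by
    refine IsSeqClosed.isClosed fun x t hx hxt => ?_
    have ht : t ∈ Icc a q := isClosed_Icc.mem_of_tendsto hxt (Eventually.of_forall fun n => (hx n).1)
    have hxt' : Tendsto x atTop (𝓝[Icc a q] t) :=
      tendsto_nhdsWithin_iff.2 ⟨hxt, Eventually.of_forall fun n => (hx n).1⟩
    have hut : Tendsto (fun n => u (x n)) atTop (𝓝 (u t)) := (hu t ht).tendsto.comp hxt'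
    have het : Tendsto (fun n => e (x n)) atTop (𝓝 (e t)) := (he t ht).tendsto.comp hxt'
    refine ⟨ht, fun z hz hzt => ?_, ?_⟩
    · rcases hzt.lt_or_eq with hzt | rfl
      · refine le_of_tendsto hut ?_
        filter_upwards [hxt.eventually (lt_mem_nhds hzt)] with n hn
        exact (hx n).2.1 z hz hn.le
      · exact le_rfl
    · exact le_of_tendsto_of_tendsto' het ((hxt.const_sub q).const_mul ε |>.const_add (e q))
        fun n => (hx n).2.2
  obtain ⟨t, ht, hleast⟩ : ∃ t ∈ W, ∀ x ∈ W, t ≤ x :=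
    ⟨sInf W, hWclosed.csInf_mem hWne hWbdd, fun x hx => csInf_le hWbdd hx⟩
  obtain ⟨htI, htmin, hte⟩ := ht
  have hat : a < t := by
    rcases htI.1.lt_or_eq with h | rfl
    · exact h
    · linarith
  have htmin' : ∀ x ∈ Icc a t, u t ≤ u x := fun x hx => htmin x ⟨hx.1, hx.2.trans htI.2⟩ hx.2
  have hstrict : ∀ x ∈ Icc a q, x < t → u t < u x := by
    intro x hx hxt
    refine (htmin x hx hxt.le).lt_of_ne fun heq => hxt.not_ge (hleast x ⟨hx, ?_, ?_⟩)
    · exact fun z hz hzx => heq ▸ htmin z hz (hzx.trans hxt.le)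
    · have := hlevel x hx t htI hxt htmin' heq.symm
      nlinarith
  obtain ⟨d, hd, hed⟩ := hderiv t ⟨hat, htI.2⟩ htmin'
  have hslope : ∀ᶠ x in 𝓝[<] t, e x < e t + ε * (t - x) := by
    have h1 := (hasDerivAt_iff_tendsto_slope.1 hed).mono_left
      (nhdsWithin_mono t fun x (hx : x < t) => hx.ne)
    filter_upwards [h1.eventually (lt_mem_nhds (show -ε < d by linarith)), self_mem_nhdsWithin]
      with x hx hxt
    have hxt : x < t := hxt
    rw [slope_def_field, lt_div_iff_of_neg (by linarith)] at hx
    linarith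
  obtain ⟨c, hct, hc⟩ := (mem_nhdsLT_iff_exists_mem_Ico_Ioo_subset hat).1 hslope
  have hsub : ∀ {y}, y ≤ t → Icc a y ⊆ Icc a q := fun hy => Icc_subset_Icc le_rfl (hy.trans htI.2)
  obtain ⟨m, hm, hmmin⟩ := isCompact_Icc.exists_isMinOn (nonempty_Icc.2 hct.1)
    (hu.mono (hsub hct.2.le))
  have hmt : u t < u m := hstrict m (hsub hct.2.le hm) (hm.2.trans_lt hct.2)
  obtain ⟨y, hyu, hcy⟩ : ∃ y, u y < u m ∧ y ∈ Ioo c t := by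
    have h1 : Tendsto u (𝓝[<] t) (𝓝 (u t)) := by
      rw [← nhdsWithin_Ioo_eq_nhdsLT hat]
      exact (hu t htI).mono_left (nhdsWithin_mono t (Ioo_subset_Icc_self.trans (hsub le_rfl)))
    exact ((h1.eventually (gt_mem_nhds hmt)).and (Ioo_mem_nhdsLT hct.2)).exists
  have hay : a ≤ y := hct.1.trans hcy.1.le
  obtain ⟨r, hr, hrmin⟩ := isCompact_Icc.exists_isMinOn (nonempty_Icc.2 hay)
    (hu.mono (hsub hcy.2.le))
  have hru : u r ≤ u y := hrmin (right_mem_Icc.2 hay)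
  have hcr : c < r := by
    by_contra! hrc
    have : u m ≤ u r := hmmin ⟨hr.1, hrc⟩
    linarith
  have hrt : r < t := hr.2.trans_lt hcy.2
  have her : e r < e t + ε * (t - r) := hc ⟨hcr, hrt⟩
  refine hrt.not_ge (hleast r ⟨hsub hcy.2.le hr, fun x hx hxr => hrmin ⟨hx.1, hxr.trans hr.2⟩, ?_⟩)
  linarith

/-- Interior derivatives of a function that is `C²` inside and `C¹` up to the boundary. -/
theorem hasDerivAt_derivWithin_Icc {a b : ℝ} {u : ℝ → ℝ} (hu : ContDiffOn ℝ 2 u (Ioo a b))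
    {t : ℝ} (ht : t ∈ Ioo a b) :
    HasDerivAt u (derivWithin u (Icc a b) t) t ∧
      HasDerivAt (derivWithin u (Icc a b)) (deriv (deriv u) t) t := by
  have heq : ∀ x ∈ Ioo a b, derivWithin u (Icc a b) x = deriv u x := fun x hx =>
    derivWithin_of_mem_nhds (Icc_mem_nhds hx.1 hx.2)
  have hmem : Ioo a b ∈ 𝓝 t := isOpen_Ioo.mem_nhds ht
  refine ⟨?_, ?_⟩
  · rw [heq t ht]
    exact ((hu.contDiffAt hmem).differentiableAt (by norm_num)).hasDerivAt
  · have h1 : ContDiffOn ℝ 1 (deriv u) (Ioo a b) :=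
      ((contDiffOn_succ_iff_deriv_of_isOpen (n := 1) isOpen_Ioo).1 hu).2.2
    refine ((h1.contDiffAt hmem).differentiableAt (by norm_num)).hasDerivAt.congr_of_eventuallyEq ?_
    filter_upwards [hmem] with x hx using heq x hx

/-- A continuous solution `s` of `v (s t) = u t` is differentiable where `v` has an invertible
derivative. -/
theorem HasStrictDerivAt.hasDerivAt_of_comp_eventuallyEq {u v s : ℝ → ℝ} {u' v' t : ℝ}
    (hv : HasStrictDerivAt v v' (s t)) (hv' : v' ≠ 0) (hu : HasDerivAt u u' t)
    (hs : ContinuousAt s t) (h : ∀ᶠ x in 𝓝 t, v (s x) = u x) :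
    HasDerivAt s (u' / v') t := by
  have h1 : HasDerivAt (hv.localInverse v v' (s t) hv') v'⁻¹ (u t) := by
    rw [← h.self_of_nhds]
    exact (hv.to_localInverse hv').hasDerivAt
  have h2 := h1.comp t hu
  rw [inv_mul_eq_div] at h2
  refine h2.congr_of_eventuallyEq ?_
  have h3 : ∀ᶠ x in 𝓝 (s t), hv.localInverse v v' (s t) hv' (v x) = x :=
    (hv.hasStrictFDerivAt_equiv hv').eventually_left_inverse
  filter_upwards [hs.eventually h3, h] with x hx hx'
  rw [Function.comp_apply, ← hx', hx]

/-- Lift a continuous function through an injective continuous function on a compact interval. -/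
theorem exists_continuousOn_lift {a b α β : ℝ} {u v : ℝ → ℝ} (hαβ : α ≤ β)
    (hu : ContinuousOn u (Icc a b)) (hv : ContinuousOn v (Icc α β)) (hinj : InjOn v (Icc α β))
    (hmaps : ∀ t ∈ Icc a b, u t ∈ Icc (v α) (v β)) :
    ∃ s : ℝ → ℝ, ContinuousOn s (Icc a b) ∧ ∀ t ∈ Icc a b, s t ∈ Icc α β ∧ v (s t) = u t := by
  have h : ∀ t : ℝ, ∃ s, t ∈ Icc a b → s ∈ Icc α β ∧ v s = u t := by
    intro t
    by_cases ht : t ∈ Icc a b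
    · obtain ⟨s, hs⟩ := intermediate_value_Icc hαβ hv (hmaps t ht)
      exact ⟨s, fun _ => hs⟩
    · exact ⟨0, fun h => absurd h ht⟩
  choose s hs using h
  refine ⟨s, ?_, hs⟩
  have hemb : IsClosedEmbedding ((Icc α β).domRestrict v) :=
    (continuousOn_iff_continuous_domRestrict.1 hv).isClosedEmbedding (injOn_iff_injective.1 hinj)
  let S : Icc a b → Icc α β := fun t => ⟨s t, (hs t t.2).1⟩
  have hS : Continuous S := by
    rw [hemb.isEmbedding.continuous_iff]
    have : (Icc α β).domRestrict v ∘ S = (Icc a b).domRestrict u := funext fun t => (hs t t.2).2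
    rw [this]
    exact continuousOn_iff_continuous_domRestrict.1 hu
  exact continuousOn_iff_continuous_domRestrict.2 (continuous_subtype_val.comp hS)

/-- Lemma 4.1″ of Li–Nirenberg: v is a reflection of u. -/
theorem stmt_8 (a b α β : ℝ) (hab : a < b) (hαβ : α < β) (u v : ℝ → ℝ)
    (hu2 : ContDiffOn ℝ 2 u (Set.Ioo a b)) (hu1 : ContDiffOn ℝ 1 u (Set.Icc a b))
    (hu'b : derivWithin u (Set.Icc a b) b = 0)
    (hubet : ∀ t ∈ Set.Ioo a b, u b < u t ∧ u t < u a)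
    (hv2 : ContDiffOn ℝ 2 v (Set.Ioo α β)) (hv1 : ContDiffOn ℝ 1 v (Set.Icc α β))
    (hv'β : derivWithin v (Set.Icc α β) β = 0)
    (hv' : ∀ s ∈ Set.Ioo α β, 0 < deriv v s)
    (hvα : v α ≤ u b) (hvβ : v β = u a)
    (hmain : ∀ t ∈ Set.Ioo a b, ∀ s ∈ Set.Ioo α β, u t = v s →
      deriv (deriv u) t ≤ deriv (deriv v) s) :
    β - α = b - a ∧ (∀ s ∈ Set.Icc α β, v s = u (a + β - s)) ∧ v α = u b := by
  have hba : u b < u a := by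
    obtain ⟨t, ht⟩ := nonempty_Ioo.2 hab
    exact (hubet t ht).1.trans (hubet t ht).2
  have hvmono : StrictMonoOn v (Icc α β) :=
    strictMonoOn_of_deriv_pos (convex_Icc α β) hv1.continuousOn (by simpa using hv')
  have hurange : ∀ t ∈ Icc a b, u b ≤ u t ∧ u t ≤ u a := by
    intro t ht
    rcases ht.1.eq_or_lt with rfl | h1
    · exact ⟨hba.le, le_rfl⟩
    rcases ht.2.eq_or_lt with rfl | h2
    · exact ⟨le_rfl, hba.le⟩
    exact ⟨(hubet t ⟨h1, h2⟩).1.le, (hubet t ⟨h1, h2⟩).2.le⟩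
  obtain ⟨s, hscont, hs⟩ := exists_continuousOn_lift hαβ.le hu1.continuousOn hv1.continuousOn
    hvmono.injOn fun t ht => ⟨hvα.trans (hurange t ht).1, hvβ ▸ (hurange t ht).2⟩
  have haI : a ∈ Icc a b := left_mem_Icc.2 hab.le
  have hbI : b ∈ Icc a b := right_mem_Icc.2 hab.le
  have hsa : s a = β := hvmono.injOn (hs a haI).1 (right_mem_Icc.2 hαβ.le)
    ((hs a haI).2.trans hvβ.symm)
  have hsβ : ∀ t ∈ Icc a b, u t < u a → s t < β := by
    intro t ht hlt
    refine (hs t ht).1.2.lt_of_ne fun h => ?_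
    have := (hs t ht).2
    rw [h, hvβ] at this
    exact hlt.ne this.symm
  have hsI : ∀ t ∈ Ioo a b, s t ∈ Ioo α β := by
    intro t ht
    have htI := Ioo_subset_Icc_self ht
    refine ⟨(hs t htI).1.1.lt_of_ne fun h => ?_, hsβ t htI (hubet t ht).2⟩
    have := (hs t htI).2
    rw [← h] at this
    linarith [(hubet t ht).1]
  set U := derivWithin u (Icc a b) with hU
  set V := derivWithin v (Icc α β) with hV
  have hUc : ContinuousOn U (Icc a b) := hu1.continuousOn_derivWithin (uniqueDiffOn_Icc hab) le_rfl
  have hVc : ContinuousOn V (Icc α β) := hv1.continuousOn_derivWithin (uniqueDiffOn_Icc hαβ) le_rfl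
  have hVpos : ∀ x ∈ Ioo α β, 0 < V x := by
    intro x hx
    rw [hV, derivWithin_of_mem_nhds (Icc_mem_nhds hx.1 hx.2)]
    exact hv' x hx
  have hsderiv : ∀ t ∈ Ioo a b, HasDerivAt s (U t / V (s t)) t := by
    intro t ht
    have hstrict : HasStrictDerivAt v (V (s t)) (s t) := by
      have := (hv2.contDiffAt (isOpen_Ioo.mem_nhds (hsI t ht))).hasStrictDerivAt (by norm_num)
      rwa [(hasDerivAt_derivWithin_Icc hv2 (hsI t ht)).1.deriv] at this
    refine hstrict.hasDerivAt_of_comp_eventuallyEq (hVpos _ (hsI t ht)).ne'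
      (hasDerivAt_derivWithin_Icc hu2 ht).1 (hscont.continuousAt (Icc_mem_nhds ht.1 ht.2)) ?_
    filter_upwards [Icc_mem_nhds ht.1 ht.2] with x hx using (hs x hx).2
  -- the energy
  let e : ℝ → ℝ := fun t => U t ^ 2 - V (s t) ^ 2
  have hec : ContinuousOn e (Icc a b) :=
    (hUc.pow 2).sub ((hVc.comp hscont fun t ht => (hs t ht).1).pow 2)
  have hederiv : ∀ t ∈ Ioo a b,
      HasDerivAt e (2 * U t * (deriv (deriv u) t - deriv (deriv v) (s t))) t := by
    intro t ht
    have h1 := (hasDerivAt_derivWithin_Icc hu2 ht).2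
    have h2 := (hasDerivAt_derivWithin_Icc hv2 (hsI t ht)).2.comp t (hsderiv t ht)
    have hne := (hVpos _ (hsI t ht)).ne'
    refine ((h1.pow 2).sub (h2.pow 2)).congr_deriv ?_
    simp only [← hU, ← hV, Function.comp_apply]
    field_simp
    ring
  have hderiv_nonneg : ∀ t ∈ Ioo a b, U t ≤ 0 →
      0 ≤ 2 * U t * (deriv (deriv u) t - deriv (deriv v) (s t)) := by
    intro t ht hUt
    have := hmain t ht (s t) (hsI t ht) (hs t (Ioo_subset_Icc_self ht)).2.symm
    exact mul_nonneg_of_nonpos_of_nonpos (by linarith) (by linarith)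
  have hea : 0 ≤ e a := by
    simp only [e, hsa, hv'β]
    nlinarith [sq_nonneg (U a)]
  have hUd : ∀ t ∈ Ioo a b, HasDerivAt u (U t) t := fun t ht =>
    (hasDerivAt_derivWithin_Icc hu2 ht).1
  have hrecord : ∀ t ∈ Ioo a b, (∀ x ∈ Icc a t, u t ≤ u x) → U t ≤ 0 := by
    intro t ht hmin
    have h1 : Tendsto (slope u t) (𝓝[<] t) (𝓝 (U t)) :=
      (hasDerivAt_iff_tendsto_slope.1 (hUd t ht)).mono_left
        (nhdsWithin_mono t fun x (hx : x < t) => hx.ne)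
    refine le_of_tendsto h1 ?_
    filter_upwards [Ioo_mem_nhdsLT ht.1] with x hx
    rw [slope_def_field]
    exact div_nonpos_of_nonneg_of_nonpos (sub_nonneg.2 (hmin x ⟨hx.1.le, hx.2.le⟩))
      (by linarith [hx.2])
  have hnoncrit : ∀ q ∈ Ioo a b, (∀ x ∈ Icc a q, u q ≤ u x) → U q ≠ 0 := by
    intro q hq hmin hUq
    have hsub : Icc a q ⊆ Icc a b := Icc_subset_Icc le_rfl hq.2.le
    have hle : e a ≤ e q := by
      refine le_of_deriv_nonneg_at_running_minima hq.1 (hu1.continuousOn.mono hsub)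
        (hec.mono hsub) hmin ?_ ?_
      · intro t ht htmin
        have ht' : t ∈ Ioo a b := ⟨ht.1, ht.2.trans_lt hq.2⟩
        exact ⟨_, hderiv_nonneg t ht' (hrecord t ht' htmin), hederiv t ht'⟩
      · intro x hx t ht hxt htmin hux
        have ht' : t ∈ Ioo a b := ⟨hx.1.trans_lt hxt, ht.2.trans_lt hq.2⟩
        have hxa : a < x := by
          refine hx.1.lt_of_ne ?_
          rintro rfl
          linarith [(hubet t ht').2]
        have hx' : x ∈ Ioo a b := ⟨hxa, hxt.trans ht'.2⟩
        have hlocal : IsLocalMin u x := by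
          filter_upwards [Icc_mem_nhds hxa hxt] with z hz
          rw [hux]
          exact htmin z hz
        have hUx : U x = 0 := hlocal.hasDerivAt_eq_zero (hUd x hx')
        have hst : s x = s t := hvmono.injOn (hs x (hsub hx)).1 (hs t (hsub ht)).1 (by
          rw [(hs x (hsub hx)).2, (hs t (hsub ht)).2, hux])
        simp only [e, hUx, hst]
        nlinarith [sq_nonneg (U t)]
    have : e q < 0 := by
      have := hVpos _ (hsI q hq)
      simp only [e, hUq]
      nlinarith
    linarith
  have hUneg : ∀ t ∈ Ioo a b, U t < 0 := by
    intro t ht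
    by_contra! hUt
    obtain ⟨q, hq, hqmin⟩ := isCompact_Icc.exists_isMinOn (nonempty_Icc.2 ht.1.le)
      (hu1.continuousOn.mono (Icc_subset_Icc le_rfl ht.2.le))
    have hqt : u q ≤ u t := hqmin (right_mem_Icc.2 ht.1.le)
    have haq : a < q := by
      refine hq.1.lt_of_ne ?_
      rintro rfl
      linarith [(hubet t ht).2]
    have hq' : q ∈ Ioo a b := ⟨haq, hq.2.trans_lt ht.2⟩
    have hqmin' : ∀ x ∈ Icc a q, u q ≤ u x := fun x hx => hqmin ⟨hx.1, hx.2.trans hq.2⟩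
    refine hnoncrit q hq' hqmin' ?_
    rcases hq.2.eq_or_lt with rfl | hlt
    · exact le_antisymm (hrecord q ht hqmin') hUt
    · refine IsLocalMin.hasDerivAt_eq_zero ?_ (hUd q hq')
      filter_upwards [Icc_mem_nhds haq hlt] with z hz using hqmin hz
  have hmono : MonotoneOn e (Icc a b) := by
    refine monotoneOn_of_hasDerivWithinAt_nonneg (convex_Icc a b) hec
      (f' := fun t => 2 * U t * (deriv (deriv u) t - deriv (deriv v) (s t))) ?_ ?_ <;>
      rw [interior_Icc]
    · exact fun t ht => (hederiv t ht).hasDerivWithinAt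
    · exact fun t ht => hderiv_nonneg t ht (hUneg t ht).le
  have heb : e b = -V (s b) ^ 2 := by simp [e, hu'b]
  have hezero : ∀ t ∈ Icc a b, e t = 0 := by
    intro t ht
    have h1 := hmono haI ht ht.1
    have h2 := hmono ht hbI ht.2
    nlinarith [sq_nonneg (V (s b))]
  have hsum : ∀ t ∈ Icc a b, s t + t = β + a := by
    intro t ht
    have hd : ∀ x ∈ Ioo a b, HasDerivAt (fun x => s x + x) 0 x := by
      intro x hx
      refine ((hsderiv x hx).add (hasDerivAt_id x)).congr_deriv ?_
      have hVx := hVpos _ (hsI x hx)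
      have h0 : (U x - V (s x)) * (U x + V (s x)) = 0 := by
        linear_combination hezero x (Ioo_subset_Icc_self hx)
      have h1 : U x = -V (s x) := by
        rcases mul_eq_zero.1 h0 with h | h <;> linarith [hUneg x hx]
      rw [h1, neg_div, div_self hVx.ne']
      norm_num
    rcases ht.1.eq_or_lt with rfl | hat
    · rw [hsa]
    obtain ⟨c, -, hc⟩ := exists_hasDerivAt_eq_slope (fun x => s x + x) (fun _ => 0) hat
      ((hscont.add continuousOn_id).mono (Icc_subset_Icc le_rfl ht.2))
      fun x hx => hd x ⟨hx.1, hx.2.trans_le ht.2⟩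
    rw [eq_div_iff (by linarith), zero_mul, hsa] at hc
    linarith
  have hsb : s b = α := by
    have hVb : V (s b) = 0 := by
      have := hezero b hbI
      rw [heb] at this
      simpa using this
    by_contra hne
    exact (hVpos (s b) ⟨(hs b hbI).1.1.lt_of_ne (Ne.symm hne), hsβ b hbI hba⟩).ne' hVb
  have hlen := hsum b hbI
  rw [hsb] at hlen
  refine ⟨by linarith, fun x hx => ?_, ?_⟩
  · have htI : a + β - x ∈ Icc a b := ⟨by linarith [hx.2], by linarith [hx.1]⟩
    have hst : s (a + β - x) = x := by linarith [hsum _ htI]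
    rw [← (hs _ htI).2, hst]
  · rw [← (hs b hbI).2, hsb]
end

section
/- Let b > 0 and let u be a real function that is positive on (0,b), C² on (0,b), and C¹ on [0,b], with u(0) = u'(0) = u(b) = 0. Let a ∈ (0,b) be the first point where u achieves its maximum over [0,b] (i.e., u(a) = max u on [0,b] and u(t) < u(a) for 0 ≤ t < a), and assume u'(t) > 0 for all t ∈ (0,a). Assume that whenever u(t) = u(s) with 0 < t < s < b, one has u''(t) ≤ u''(s). Then u is symmetric about b/2, i.e., u(t) = u(b − t) for all t ∈ [0,b], and u(t) = u(a) for all t ∈ [a, b − a]. -/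
open Set Filter Topology

/-- A function with negative derivative at `x` takes smaller values immediately to the right. -/
theorem HasDerivAt.eventually_nhdsGT_lt {g : ℝ → ℝ} {g' x : ℝ} (h : HasDerivAt g g' x)
    (hg : g' < 0) : ∀ᶠ y in 𝓝[>] x, g y < g x := by
  have h1 := ((hasDerivAt_iff_tendsto_slope_left_right.1 h).2).eventually (gt_mem_nhds hg)
  filter_upwards [h1, self_mem_nhdsWithin] with y hy hxy
  have hxy' : 0 < y - x := sub_pos.2 hxy
  rw [slope_def_field, div_lt_iff₀ hxy'] at hy
  linarith

/-- The derivative is nonpositive at a point that is a maximum to its right. -/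
theorem HasDerivAt.nonpos_of_forall_Icc_le {g : ℝ → ℝ} {g' x b : ℝ} (h : HasDerivAt g g' x)
    (hxb : x < b) (hmax : ∀ r ∈ Icc x b, g r ≤ g x) : g' ≤ 0 := by
  by_contra! hpos
  have h1 := (h.neg).eventually_nhdsGT_lt (by linarith)
  obtain ⟨y, hy, hyx⟩ := (h1.and (Ioo_mem_nhdsGT hxb)).exists
  have := hmax y ⟨hyx.1.le, hyx.2.le⟩
  simp only [Pi.neg_apply] at hy
  linarith

theorem antitoneOn_Icc_of_hasDerivAt_nonpos {f f' : ℝ → ℝ} {a b : ℝ}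
    (hf : ContinuousOn f (Icc a b)) (hd : ∀ s ∈ Ioo a b, HasDerivAt f (f' s) s)
    (hn : ∀ s ∈ Ioo a b, f' s ≤ 0) : AntitoneOn f (Icc a b) := by
  apply antitoneOn_of_deriv_nonpos (convex_Icc a b) hf
  · rw [interior_Icc]
    exact fun s hs => (hd s hs).differentiableAt.differentiableWithinAt
  · rw [interior_Icc]
    exact fun s hs => by rw [(hd s hs).deriv]; exact hn s hs

theorem eq_of_hasDerivAt_eq_zero {f : ℝ → ℝ} {a b : ℝ} (hab : a ≤ b)
    (hf : ContinuousOn f (Icc a b)) (hd : ∀ s ∈ Ioo a b, HasDerivAt f 0 s) : f a = f b := by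
  rcases hab.eq_or_lt with rfl | hab
  · rfl
  obtain ⟨c, -, h⟩ := exists_hasDerivAt_eq_slope f (fun _ => 0) hab hf hd
  have h0 : 0 < b - a := sub_pos.2 hab
  have := (div_eq_zero_iff.1 h.symm).resolve_right h0.ne'
  linarith

/-- If `q` is a strict maximum of `u` on `[q, b]`, then arbitrarily close to `q` on the right there
are points `s` that are maxima of `u` on `[s, b]`. -/
theorem exists_right_max_near {u : ℝ → ℝ} {q b d : ℝ} (hqd : q < d) (hdb : d ≤ b)
    (hu : ContinuousOn u (Icc q b)) (hmax : ∀ r ∈ Ioc q b, u r < u q) :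
    ∃ s ∈ Ioo q d, ∀ r ∈ Icc s b, u r ≤ u s := by
  obtain ⟨z, hz, hzmax⟩ := isCompact_Icc.exists_isMaxOn (nonempty_Icc.2 hdb)
    (hu.mono (Icc_subset_Icc_left hqd.le))
  have hzq : u z < u q := hmax z ⟨hqd.trans_le hz.1, hz.2⟩
  have hcont : Tendsto u (𝓝[>] q) (𝓝 (u q)) :=
    (hu q (left_mem_Icc.2 (hqd.le.trans hdb))).mono_left
      ((nhdsWithin_le_iff).2 (Icc_mem_nhdsGT (hqd.trans_le hdb)))
  obtain ⟨p, hp, hpd⟩ := ((hcont.eventually (lt_mem_nhds hzq)).and (Ioo_mem_nhdsGT hqd)).exists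
  obtain ⟨s, hs, hsmax⟩ := isCompact_Icc.exists_isMaxOn (nonempty_Icc.2 (hpd.2.le.trans hdb))
    (hu.mono (Icc_subset_Icc_left hpd.1.le))
  refine ⟨s, ⟨hpd.1.trans_le hs.1, ?_⟩, fun r hr => hsmax ⟨hs.1.trans hr.1, hr.2⟩⟩
  by_contra! hds
  have h1 : u s ≤ u z := hzmax ⟨hds, hs.2⟩
  have h2 : u p ≤ u s := hsmax (left_mem_Icc.2 (hpd.2.le.trans hdb))
  linarith

/-- A function `f` is nonincreasing along the points `s` that are maxima of `u` on `[s, b]`,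
provided its derivative is nonpositive at such points and it does not increase between two such
points at the same level. -/
theorem le_of_nonpos_deriv_on_right_max {u f f' : ℝ → ℝ} {q b : ℝ} (hqb : q ≤ b)
    (hu : ContinuousOn u (Icc q b)) (hf : ContinuousOn f (Icc q b))
    (hq : ∀ r ∈ Icc q b, u r ≤ u q) (hub : ∀ s ∈ Ico q b, u b < u s)
    (hd : ∀ s ∈ Ico q b, (∀ r ∈ Icc s b, u r ≤ u s) → HasDerivAt f (f' s) s ∧ f' s ≤ 0)
    (hflat : ∀ s r, q ≤ s → s < r → r < b → (∀ x ∈ Icc s b, u x ≤ u s) → u r = u s → f r ≤ f s) :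
    f b ≤ f q := by
  suffices H : ∀ ε > 0, f b - ε * b ≤ f q - ε * q by
    by_contra! hlt
    rcases hqb.eq_or_lt with rfl | hqb
    · exact lt_irrefl _ hlt
    have h0 : 0 < b - q := sub_pos.2 hqb
    have := H ((f b - f q) / (2 * (b - q))) (by have := sub_pos.2 hlt; positivity)
    have h2 : (f b - f q) / (2 * (b - q)) * (b - q) = (f b - f q) / 2 := by field_simp
    nlinarith
  intro ε hε
  set R : Set ℝ := {s ∈ Icc q b | ∀ r ∈ Icc q b, s ≤ r → u r ≤ u s} with hR
  have hRclosed : IsClosed R := by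
    have hR' : R = ⋂ r ∈ Icc q b, {s ∈ Icc q b | s ≤ r → u r ≤ u s} := by
      ext s
      simp only [hR, mem_ofPred_eq, mem_iInter]
      exact ⟨fun h r hr => ⟨h.1, h.2 r hr⟩,
        fun h => ⟨(h q (left_mem_Icc.2 hqb)).1, fun r hr => (h r hr).2⟩⟩
    rw [hR']
    refine isClosed_biInter fun r hr => ?_
    rw [← isSeqClosed_iff_isClosed]
    intro s x hs hx
    have hxI : x ∈ Icc q b := isClosed_Icc.mem_of_tendsto hx (Eventually.of_forall fun n => (hs n).1)
    refine ⟨hxI, fun hxr => ?_⟩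
    rcases hxr.eq_or_lt with rfl | hxr
    · exact le_rfl
    have hux : Tendsto (u ∘ s) atTop (𝓝 (u x)) :=
      (hu x hxI).tendsto.comp
        (tendsto_nhdsWithin_iff.2 ⟨hx, Eventually.of_forall fun n => (hs n).1⟩)
    refine ge_of_tendsto hux ?_
    filter_upwards [hx.eventually (gt_mem_nhds hxr)] with n hn using (hs n).2 hn.le
  have hRsub : R ⊆ Icc q b := fun s hs => hs.1
  have hRcompact : IsCompact R := isCompact_Icc.of_isClosed_subset hRclosed hRsub
  have hqR : q ∈ R := ⟨left_mem_Icc.2 hqb, fun r hr _ => hq r hr⟩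
  obtain ⟨p, hpR, hpmin⟩ := hRcompact.exists_isMinOn ⟨q, hqR⟩
    (f := fun s => f s - ε * s) ((hf.mono hRsub).sub (by fun_prop))
  have hpb : p = b := by
    by_contra hne
    have hpb : p < b := lt_of_le_of_ne hpR.1.2 hne
    have hprec : ∀ r ∈ Icc p b, u r ≤ u p := fun r hr => hpR.2 r ⟨hpR.1.1.trans hr.1, hr.2⟩ hr.1
    by_cases hstrict : ∀ r ∈ Ioc p b, u r < u p
    · obtain ⟨hder, hneg⟩ := hd p ⟨hpR.1.1, hpb⟩ hprec
      have hder' : HasDerivAt (fun s => f s - ε * s) (f' p - ε * 1) p :=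
        hder.sub ((hasDerivAt_id p).const_mul ε)
      have hev := hder'.eventually_nhdsGT_lt (by linarith)
      obtain ⟨d, hd1, hd2⟩ := (mem_nhdsGT_iff_exists_Ioo_subset' hpb).1 hev
      have hd1' : p < d := hd1
      obtain ⟨s, hs, hsmax⟩ := exists_right_max_near (lt_min hd1' hpb) (min_le_right d b)
        (hu.mono (Icc_subset_Icc_left hpR.1.1)) hstrict
      have hsR : s ∈ R := ⟨⟨hpR.1.1.trans hs.1.le, hs.2.le.trans (min_le_right _ _)⟩,
        fun r hr hsr => hsmax r ⟨hsr, hr.2⟩⟩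
      have h1 : f s - ε * s < f p - ε * p := hd2 ⟨hs.1, hs.2.trans_le (min_le_left _ _)⟩
      have h2 : f p - ε * p ≤ f s - ε * s := hpmin hsR
      linarith
    · push Not at hstrict
      obtain ⟨r, hr, hur⟩ := hstrict
      have hur' : u r = u p := le_antisymm (hprec r ⟨hr.1.le, hr.2⟩) hur
      have hrb : r < b := by
        refine lt_of_le_of_ne hr.2 fun h => ?_
        have := hub p ⟨hpR.1.1, hpb⟩
        rw [← h] at this
        linarith
      have h1 := hflat p r hpR.1.1 hr.1 hrb hprec hur'
      have hrR : r ∈ R := ⟨⟨hpR.1.1.trans hr.1.le, hr.2⟩, fun x hx hrx => by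
        rw [hur']; exact hprec x ⟨hr.1.le.trans hrx, hx.2⟩⟩
      have h2 : f p - ε * p ≤ f r - ε * r := hpmin hrR
      nlinarith [hr.1]
  rw [← hpb]
  exact hpmin hqR

/-- The inverse of an increasing differentiable branch. -/
theorem exists_inverse_branch {u v : ℝ → ℝ} {a : ℝ} (ha : 0 < a)
    (hu : ContinuousOn u (Icc 0 a)) (hd : ∀ s ∈ Ioo 0 a, HasDerivAt u (v s) s)
    (hv : ∀ s ∈ Ioo 0 a, 0 < v s) :
    ∃ x : ℝ → ℝ, (∀ t ∈ Icc 0 a, x (u t) = t) ∧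
      (∀ y ∈ Icc (u 0) (u a), x y ∈ Icc 0 a ∧ u (x y) = y) ∧
      ContinuousOn x (Icc (u 0) (u a)) ∧
      ∀ y ∈ Ioo (u 0) (u a), x y ∈ Ioo 0 a ∧ HasDerivAt x (v (x y))⁻¹ y := by
  have hmono : StrictMonoOn u (Icc 0 a) := by
    apply strictMonoOn_of_deriv_pos (convex_Icc 0 a) hu
    rw [interior_Icc]
    exact fun s hs => by rw [(hd s hs).deriv]; exact hv s hs
  have h0 : (0 : ℝ) ∈ Icc 0 a := left_mem_Icc.2 ha.le
  have h1 : a ∈ Icc 0 a := right_mem_Icc.2 ha.le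
  have hex : ∀ y, ∃ t, y ∈ Icc (u 0) (u a) → t ∈ Icc 0 a ∧ u t = y := fun y => by
    by_cases hy : y ∈ Icc (u 0) (u a)
    · obtain ⟨t, ht, hty⟩ := intermediate_value_Icc ha.le hu hy
      exact ⟨t, fun _ => ⟨ht, hty⟩⟩
    · exact ⟨0, fun h => absurd h hy⟩
  choose x hx using hex
  have hcont : ContinuousOn x (Icc (u 0) (u a)) := by
    intro y hy
    obtain ⟨hxy, huy⟩ := hx y hy
    refine tendsto_order.2 ⟨fun l hl => ?_, fun l hl => ?_⟩
    · rcases lt_or_ge l 0 with hl0 | hl0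
      · filter_upwards [self_mem_nhdsWithin] with z hz using hl0.trans_le (hx z hz).1.1
      · have hlI : l ∈ Icc 0 a := ⟨hl0, hl.le.trans hxy.2⟩
        have hlt : u l < y := huy ▸ hmono hlI hxy hl
        filter_upwards [self_mem_nhdsWithin, mem_nhdsWithin_of_mem_nhds (lt_mem_nhds hlt)]
          with z hz hlz
        refine (hmono.lt_iff_lt hlI (hx z hz).1).1 ?_
        rwa [(hx z hz).2]
    · rcases lt_or_ge a l with hl0 | hl0
      · filter_upwards [self_mem_nhdsWithin] with z hz using (hx z hz).1.2.trans_lt hl0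
      · have hlI : l ∈ Icc 0 a := ⟨hxy.1.trans hl.le, hl0⟩
        have hlt : y < u l := huy ▸ hmono hxy hlI hl
        filter_upwards [self_mem_nhdsWithin, mem_nhdsWithin_of_mem_nhds (gt_mem_nhds hlt)]
          with z hz hlz
        refine (hmono.lt_iff_lt (hx z hz).1 hlI).1 ?_
        rwa [(hx z hz).2]
  refine ⟨x, fun t ht => ?_, hx, hcont, fun y hy => ?_⟩
  · have hut : u t ∈ Icc (u 0) (u a) :=
      ⟨hmono.monotoneOn h0 ht ht.1, hmono.monotoneOn ht h1 ht.2⟩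
    exact hmono.injOn (hx _ hut).1 ht (hx _ hut).2
  · obtain ⟨hxy, huy⟩ := hx y (Ioo_subset_Icc_self hy)
    have hxI : x y ∈ Ioo 0 a := by
      refine ⟨lt_of_le_of_ne hxy.1 fun h => ?_, lt_of_le_of_ne hxy.2 fun h => ?_⟩
      · rw [← h] at huy; exact hy.1.ne huy
      · rw [h] at huy; exact hy.2.ne' huy
    have hnhds : Icc (u 0) (u a) ∈ 𝓝 y := Icc_mem_nhds hy.1 hy.2
    refine ⟨hxI, HasDerivAt.of_local_left_inverse (hcont.continuousAt hnhds) (hd _ hxI)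
      (hv _ hxI).ne' ?_⟩
    filter_upwards [hnhds] with z hz using (hx z hz).2

/-- Symmetry, in terms of `v = u'` and `w = u''`. -/
theorem symm_of_second_deriv_le {b a : ℝ} {u v w : ℝ → ℝ}
    (hpos : ∀ t ∈ Ioo 0 b, 0 < u t)
    (huc : ContinuousOn u (Icc 0 b)) (hvc : ContinuousOn v (Icc 0 b))
    (hud : ∀ t ∈ Ioo 0 b, HasDerivAt u (v t) t) (hvd : ∀ t ∈ Ioo 0 b, HasDerivAt v (w t) t)
    (hu0 : u 0 = 0) (hv0 : v 0 = 0) (hub : u b = 0) (ha : a ∈ Ioo 0 b)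
    (hamax : ∀ t ∈ Icc 0 b, u t ≤ u a) (hv : ∀ t ∈ Ioo 0 a, 0 < v t)
    (hmain : ∀ t s : ℝ, 0 < t → t < s → s < b → u t = u s → w t ≤ w s) :
    (∀ t ∈ Icc 0 b, u t = u (b - t)) ∧ ∀ t ∈ Icc a (b - a), u t = u a := by
  obtain ⟨ha0, hab⟩ := ha
  obtain ⟨x, hxu, hxI, hxc, hxd⟩ := exists_inverse_branch ha0
    (huc.mono (Icc_subset_Icc_right hab.le)) (fun s hs => hud s ⟨hs.1, hs.2.trans hab⟩) hv
  rw [hu0] at hxI hxc hxd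
  have hcrit : ∀ l r s, 0 ≤ l → r ≤ b → s ∈ Ioo l r → (∀ z ∈ Icc l r, u z ≤ u s) → v s = 0 := by
    intro l r s hl hr hs hmax
    refine IsLocalMax.hasDerivAt_eq_zero ?_ (hud s ⟨hl.trans_lt hs.1, hs.2.trans_le hr⟩)
    filter_upwards [Icc_mem_nhds hs.1 hs.2] with z hz using hmax z hz
  have huI : MapsTo u (Icc 0 b) (Icc 0 (u a)) := by
    refine fun t ht => ⟨?_, hamax t ht⟩
    rcases ht.1.eq_or_lt with rfl | h
    · exact hu0.ge
    rcases ht.2.eq_or_lt with rfl | h'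
    · exact hub.ge
    exact (hpos t ⟨h, h'⟩).le
  have hxuc : ContinuousOn (fun s => x (u s)) (Icc 0 b) := hxc.comp huc huI
  -- the energy defect
  set E : ℝ → ℝ := fun s => v s ^ 2 - v (x (u s)) ^ 2 with hE
  have hEc : ContinuousOn E (Icc 0 b) := by
    refine (hvc.pow 2).sub (ContinuousOn.pow (hvc.comp hxuc fun s hs => ?_) 2)
    have := (hxI _ (huI hs)).1
    exact ⟨this.1, this.2.trans hab.le⟩
  have hxud : ∀ s ∈ Ioo 0 b, u s < u a →
      HasDerivAt (fun s => x (u s)) ((v (x (u s)))⁻¹ * v s) s := fun s hs hlt =>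
    (hxd (u s) ⟨hpos s hs, hlt⟩).2.comp s (hud s hs)
  have hvx : ∀ s ∈ Ioo 0 b, u s < u a → 0 < v (x (u s)) := fun s hs hlt =>
    hv _ (hxd (u s) ⟨hpos s hs, hlt⟩).1
  have hEd : ∀ s ∈ Ioo 0 b, u s < u a →
      HasDerivAt E (2 * v s * (w s - w (x (u s)))) s := by
    intro s hs hlt
    have hxs := (hxd (u s) ⟨hpos s hs, hlt⟩).1
    have h1 : HasDerivAt (fun s => v (x (u s))) (w (x (u s)) * ((v (x (u s)))⁻¹ * v s)) s :=
      (hvd _ ⟨hxs.1, hxs.2.trans hab⟩).comp s (hxud s hs hlt)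
    have h2 := ((hvd s hs).pow 2).sub (h1.pow 2)
    have h3 := (hvx s hs hlt).ne'
    refine h2.congr_deriv ?_
    field_simp
    ring
  have hw : ∀ s ∈ Ioo a b, u s < u a → w (x (u s)) ≤ w s := by
    intro s hs hlt
    have hs' : s ∈ Ioo 0 b := ⟨ha0.trans hs.1, hs.2⟩
    have hxs := (hxd (u s) ⟨hpos s hs', hlt⟩).1
    exact hmain _ _ hxs.1 (hxs.2.trans hs.1) hs.2 (hxI _ (huI (Ioo_subset_Icc_self hs'))).2
  have hva : v a = 0 := hcrit 0 b a le_rfl le_rfl ⟨ha0, hab⟩ hamax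
  have hxa : x (u a) = a := hxu a (right_mem_Icc.2 ha0.le)
  have hx0 : x 0 = 0 := by
    have := hxu 0 (left_mem_Icc.2 ha0.le)
    rwa [hu0] at this
  have hEb : 0 ≤ E b := by
    simp only [hE, hub, hx0, hv0]
    nlinarith [sq_nonneg (v b)]
  -- the last maximum point
  obtain ⟨c, ⟨⟨hac, hcb'⟩, hcu⟩, hcmax⟩ : ∃ c, IsGreatest {s ∈ Icc a b | u s = u a} c := by
    refine IsCompact.exists_isGreatest ?_ ⟨a, ⟨le_rfl, hab.le⟩, rfl⟩
    have : IsClosed (Icc a b ∩ u ⁻¹' {u a}) :=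
      (huc.mono (Icc_subset_Icc_left ha0.le)).preimage_isClosed_of_isClosed isClosed_Icc
        isClosed_singleton
    exact isCompact_Icc.of_isClosed_subset this inter_subset_left
  have hua : 0 < u a := hpos a ⟨ha0, hab⟩
  have hcb : c < b := lt_of_le_of_ne hcb' fun h => by rw [h, hub] at hcu; exact hua.ne hcu
  have hc0 : 0 < c := ha0.trans_le hac
  have hlt : ∀ s ∈ Ioo c b, u s < u a := fun s hs =>
    lt_of_le_of_ne (hamax s ⟨(hc0.trans hs.1).le, hs.2.le⟩) fun h =>
      (hcmax ⟨⟨hac.trans hs.1.le, hs.2.le⟩, h⟩).not_gt hs.1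
  have hmaxcrit : ∀ s ∈ Ioo 0 b, u s = u a → v s = 0 := fun s hs h =>
    hcrit 0 b s le_rfl le_rfl hs fun z hz => (hamax z hz).trans h.ge
  have hEmax : ∀ s ∈ Ioo 0 b, u s = u a → E s = 0 := fun s hs h => by
    simp only [hE, hmaxcrit s hs h, h, hxa, hva]; ring
  have hEcrit : ∀ s ∈ Ioo 0 b, u s < u a → v s = 0 → E s < 0 := fun s hs h h' => by
    have := hvx s hs h
    simp only [hE, h']
    nlinarith
  have hvneg : ∀ s ∈ Ioo c b, v s < 0 := by
    intro s hs
    by_contra! hvs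
    obtain ⟨q, hq, hqmax⟩ := isCompact_Icc.exists_isMaxOn (nonempty_Icc.2 hs.2.le)
      (huc.mono (Icc_subset_Icc_left (hc0.trans hs.1).le))
    have hqmax' : ∀ r ∈ Icc s b, u r ≤ u q := fun r hr => hqmax hr
    have hs0 : 0 < s := hc0.trans hs.1
    have hqb : q < b := by
      refine lt_of_le_of_ne hq.2 fun h => ?_
      have h1 := hqmax' s (left_mem_Icc.2 hs.2.le)
      rw [h, hub] at h1
      exact (hpos s ⟨hs0, hs.2⟩).not_ge h1
    have hqc : c < q := hs.1.trans_le hq.1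
    have hq0 : 0 < q := hs0.trans_le hq.1
    have hvq : v q = 0 := by
      rcases hq.1.eq_or_lt with rfl | hsq
      · exact le_antisymm ((hud s ⟨hs0, hqb⟩).nonpos_of_forall_Icc_le hqb hqmax') hvs
      · exact hcrit s b q hs0.le le_rfl ⟨hsq, hqb⟩ hqmax'
    have hEq := hEcrit q ⟨hq0, hqb⟩ (hlt q ⟨hqc, hqb⟩) hvq
    have hEbq : E b ≤ E q := by
      have hsub : Icc q b ⊆ Icc 0 b := Icc_subset_Icc_left hq0.le
      refine le_of_nonpos_deriv_on_right_max hqb.le (huc.mono hsub) (hEc.mono hsub)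
        (fun r hr => hqmax' r ⟨hq.1.trans hr.1, hr.2⟩)
        (fun r hr => by rw [hub]; exact hpos r ⟨hq0.trans_le hr.1, hr.2⟩)
        (f' := fun s => 2 * v s * (w s - w (x (u s)))) (fun r hr hrmax => ?_) ?_
      · have hr0 : r ∈ Ioo 0 b := ⟨hq0.trans_le hr.1, hr.2⟩
        have hrc : r ∈ Ioo c b := ⟨hqc.trans_le hr.1, hr.2⟩
        refine ⟨hEd r hr0 (hlt r hrc), ?_⟩
        have h1 := (hud r hr0).nonpos_of_forall_Icc_le hr.2 hrmax
        have h2 := hw r ⟨hac.trans_lt hrc.1, hr.2⟩ (hlt r hrc)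
        exact mul_nonpos_of_nonpos_of_nonneg (by linarith) (by linarith)
      · intro p r hqp hpr hrb hpmax hrp
        have hvr : v r = 0 := hcrit p b r (hq0.le.trans hqp) le_rfl ⟨hpr, hrb⟩
          (fun z hz => (hpmax z hz).trans hrp.ge)
        simp only [hE, hvr, hrp]
        nlinarith [sq_nonneg (v p)]
    linarith
  have hcI : Icc c b ⊆ Icc 0 b := Icc_subset_Icc_left hc0.le
  have hcO : Ioo c b ⊆ Ioo 0 b := Ioo_subset_Ioo_left hc0.le
  have hE0 : ∀ s ∈ Icc c b, E s = 0 := by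
    have hanti : AntitoneOn E (Icc c b) := by
      refine antitoneOn_Icc_of_hasDerivAt_nonpos (hEc.mono hcI)
        (fun s hs => hEd s (hcO hs) (hlt s hs)) fun s hs => ?_
      have h1 := hvneg s hs
      have h2 := hw s ⟨hac.trans_lt hs.1, hs.2⟩ (hlt s hs)
      exact mul_nonpos_of_nonpos_of_nonneg (by linarith) (by linarith)
    intro s hs
    have h1 := hanti (left_mem_Icc.2 hcb.le) hs hs.1
    have h2 := hanti hs (right_mem_Icc.2 hcb.le) hs.2
    have h3 := hEmax c ⟨hc0, hcb⟩ hcu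
    linarith
  have hweq : ∀ s ∈ Ioo c b, w s = w (x (u s)) := by
    intro s hs
    have h1 : HasDerivAt E 0 s := by
      refine (hasDerivAt_const s (0 : ℝ)).congr_of_eventuallyEq ?_
      filter_upwards [Icc_mem_nhds hs.1 hs.2] with z hz using hE0 z hz
    have h2 := (hEd s (hcO hs) (hlt s hs)).unique h1
    have h3 := (hvneg s hs).ne
    have h4 : w s - w (x (u s)) = 0 := by simpa [h3] using h2
    linarith
  have hflat : ∀ t ∈ Icc a c, u t = u a := by
    obtain ⟨m, hm, hmmin⟩ := isCompact_Icc.exists_isMinOn (nonempty_Icc.2 hac)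
      (huc.mono (Icc_subset_Icc ha0.le hcb.le))
    suffices hmu : u m = u a from fun t ht =>
      le_antisymm (hamax t ⟨ha0.le.trans ht.1, ht.2.trans hcb.le⟩) (hmu ▸ hmmin ht)
    by_contra hne
    have hm0 : m ∈ Ioo 0 b := ⟨ha0.trans_le hm.1, hm.2.trans_lt hcb⟩
    have hmlt : u m < u a := lt_of_le_of_ne (hamax m (Ioo_subset_Icc_self hm0)) hne
    have ham : a < m := lt_of_le_of_ne hm.1 fun h => hne (by rw [← h])
    have hmc : m < c := lt_of_le_of_ne hm.2 fun h => hne (by rw [h, hcu])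
    have hvm : v m = 0 := by
      refine IsLocalMin.hasDerivAt_eq_zero ?_ (hud m hm0)
      filter_upwards [Icc_mem_nhds ham hmc] with z hz using hmmin hz
    obtain ⟨l, ⟨⟨hal, hlm'⟩, hlu⟩, hlmax⟩ : ∃ l, IsGreatest {s ∈ Icc a m | u s = u a} l := by
      refine IsCompact.exists_isGreatest ?_ ⟨a, ⟨le_rfl, ham.le⟩, rfl⟩
      have : IsClosed (Icc a m ∩ u ⁻¹' {u a}) :=
        (huc.mono (Icc_subset_Icc ha0.le hm0.2.le)).preimage_isClosed_of_isClosed isClosed_Icc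
          isClosed_singleton
      exact isCompact_Icc.of_isClosed_subset this inter_subset_left
    have hl0 : l ∈ Ioo 0 b := ⟨ha0.trans_le hal, hlm'.trans_lt hm0.2⟩
    have hElm : E l = E m := by
      refine eq_of_hasDerivAt_eq_zero hlm' (hEc.mono (Icc_subset_Icc hl0.1.le hm0.2.le))
        fun s hs => ?_
      have hs0 : s ∈ Ioo 0 b := ⟨hl0.1.trans hs.1, hs.2.trans hm0.2⟩
      have hsa : u s < u a := lt_of_le_of_ne (hamax s (Ioo_subset_Icc_self hs0)) fun h =>
        (hlmax ⟨⟨hal.trans hs.1.le, hs.2.le⟩, h⟩).not_gt hs.1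
      have h1 := hw s ⟨hal.trans_lt hs.1, hs0.2⟩ hsa
      obtain ⟨r, hr, hrs⟩ := intermediate_value_Ioo' hcb.le (huc.mono hcI)
        (show u s ∈ Ioo (u b) (u c) by rw [hub, hcu]; exact ⟨hpos s hs0, hsa⟩)
      have h2 := hmain s r hs0.1 ((hs.2.trans hmc).trans hr.1) hr.2 hrs.symm
      rw [hweq r hr, hrs] at h2
      refine (hEd s hs0 hsa).congr_deriv ?_
      rw [le_antisymm h2 h1]
      ring
    have h1 := hEmax l hl0 hlu
    have h2 := hEcrit m hm0 hmlt hvm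
    linarith
  have hrefl : ∀ s ∈ Icc c b, x (u s) = b - s := by
    intro s hs
    have h := eq_of_hasDerivAt_eq_zero (f := fun s => s + x (u s)) hs.2
      (continuousOn_id.add (hxuc.mono (Icc_subset_Icc_left (hc0.le.trans hs.1)))) fun r hr => ?_
    · simp only [hub, hx0] at h
      linarith
    · have hr' : r ∈ Ioo c b := ⟨hs.1.trans_lt hr.1, hr.2⟩
      have h1 := hvneg r hr'
      have h2 := hvx r (hcO hr') (hlt r hr')
      have h3 : v r ^ 2 - v (x (u r)) ^ 2 = 0 := hE0 r (Ioo_subset_Icc_self hr')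
      have h4 : v r = - v (x (u r)) := by nlinarith
      refine ((hasDerivAt_id r).add (hxud r (hcO hr') (hlt r hr'))).congr_deriv ?_
      rw [h4]
      field_simp
      ring
  have hca : c = b - a := by
    have h := hrefl c (left_mem_Icc.2 hcb.le)
    rw [hcu, hxa] at h
    linarith
  have hright : ∀ s ∈ Icc c b, u (b - s) = u s := fun s hs => by
    rw [← hrefl s hs]
    exact (hxI _ (huI (hcI hs))).2
  rw [← hca]
  refine ⟨fun t ht => ?_, hflat⟩
  rcases le_total c t with hct | htc
  · exact (hright t ⟨hct, ht.2⟩).symm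
  rcases le_total a t with hat | hta
  · rw [hflat t ⟨hat, htc⟩, hflat (b - t) ⟨by linarith, by linarith⟩]
  · have h := hright (b - t) ⟨by linarith, by linarith [ht.1]⟩
    rwa [sub_sub_cancel] at h

/-- Theorem 4.1 of Li–Nirenberg. -/
theorem stmt_9 (b : ℝ) (hb : 0 < b) (u : ℝ → ℝ)
    (hpos : ∀ t ∈ Set.Ioo 0 b, 0 < u t)
    (hu2 : ContDiffOn ℝ 2 u (Set.Ioo 0 b)) (hu1 : ContDiffOn ℝ 1 u (Set.Icc 0 b))
    (hu0 : u 0 = 0) (hu'0 : derivWithin u (Set.Icc 0 b) 0 = 0) (hub : u b = 0)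
    (a : ℝ) (ha : a ∈ Set.Ioo 0 b)
    (hamax : ∀ t ∈ Set.Icc 0 b, u t ≤ u a)
    (hafirst : ∀ t : ℝ, 0 ≤ t → t < a → u t < u a)
    (hu' : ∀ t ∈ Set.Ioo 0 a, 0 < deriv u t)
    (hmain : ∀ t s : ℝ, 0 < t → t < s → s < b → u t = u s →
      deriv (deriv u) t ≤ deriv (deriv u) s) :
    (∀ t ∈ Set.Icc 0 b, u t = u (b - t)) ∧ ∀ t ∈ Set.Icc a (b - a), u t = u a := by
  have hderiv : ∀ t ∈ Ioo 0 b, derivWithin u (Icc 0 b) t = deriv u t := fun t ht =>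
    derivWithin_of_mem_nhds (Icc_mem_nhds ht.1 ht.2)
  have hdd : ContDiffOn ℝ 1 (deriv u) (Ioo 0 b) :=
    hu2.deriv_of_isOpen isOpen_Ioo (by norm_num)
  refine symm_of_second_deriv_le (v := derivWithin u (Icc 0 b)) (w := deriv (deriv u)) hpos
    hu1.continuousOn (hu1.continuousOn_derivWithin (uniqueDiffOn_Icc hb) le_rfl)
    (fun t ht => ?_) (fun t ht => ?_) hu0 hu'0 hub ha hamax (fun t ht => ?_) hmain
  · rw [hderiv t ht]
    exact ((hu2.differentiableOn (by norm_num)).differentiableAt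
      (Ioo_mem_nhds ht.1 ht.2)).hasDerivAt
  · have h := ((hdd.differentiableOn (by norm_num)).differentiableAt
      (Ioo_mem_nhds ht.1 ht.2)).hasDerivAt
    refine h.congr_of_eventuallyEq ?_
    filter_upwards [Ioo_mem_nhds ht.1 ht.2] with z hz using hderiv z hz
  · rw [hderiv t ⟨ht.1, ht.2.trans ha.2⟩]
    exact hu' t ht
end

section
/- Let c > 0, let f : (0,∞) → ℝ be locally Lipschitz on (0,∞), and let u be a real function on [0,c) that is continuously differentiable on [0,c), positive on (0,c), twice differentiable on (0,c), with u(0) = 0 and u''(t) = f(u(t)) for all t ∈ (0,c). Then u'(t) > 0 for all t ∈ (0, c/2). -/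
open Set in
/-- A solution of the autonomous equation `u'' = f u` is symmetric about each of its critical
points. -/
theorem eq_reflection_of_deriv_eq_zero {f u : ℝ → ℝ} {L : NNReal} {a r : ℝ} (hr : 0 ≤ r)
    (hf : LipschitzOnWith L f (u '' Icc (a - r) (a + r)))
    (hu : ∀ t ∈ Icc (a - r) (a + r), HasDerivAt u (deriv u t) t)
    (hu' : ∀ t ∈ Icc (a - r) (a + r), HasDerivAt (deriv u) (f (u t)) t)
    (ha : deriv u a = 0) : u (a + r) = u (a - r) := by
  have hadd : ∀ s ∈ Icc 0 r, a + s ∈ Icc (a - r) (a + r) := fun s hs =>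
    ⟨by linarith [hs.1], by linarith [hs.2]⟩
  have hsub : ∀ s ∈ Icc 0 r, a - s ∈ Icc (a - r) (a + r) := fun s hs =>
    ⟨by linarith [hs.2], by linarith [hs.1]⟩
  have hX : ∀ s ∈ Icc 0 r, HasDerivAt (fun s => (u (a + s), deriv u (a + s)))
      (deriv u (a + s), f (u (a + s))) s := fun s hs =>
    ((hu _ (hadd s hs)).comp_const_add a s).prodMk ((hu' _ (hadd s hs)).comp_const_add a s)
  have hY : ∀ s ∈ Icc 0 r, HasDerivAt (fun s => (u (a - s), -deriv u (a - s)))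
      (-deriv u (a - s), f (u (a - s))) s := fun s hs => by
    simpa using ((hu _ (hsub s hs)).comp_const_sub a s).prodMk
      ((hu' _ (hsub s hs)).comp_const_sub a s).neg
  have hv : ∀ t ∈ Ico 0 r, LipschitzOnWith (max 1 (L * 1))
      (fun p : ℝ × ℝ => (p.2, f p.1)) {p | p.1 ∈ u '' Icc (a - r) (a + r)} := fun _ _ =>
    LipschitzWith.prod_snd.lipschitzOnWith.prodMk
      (hf.comp LipschitzWith.prod_fst.lipschitzOnWith fun _ hp => hp)
  have key := ODE_solution_unique_of_mem_Icc_right hv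
    (fun s hs => (hX s hs).continuousAt.continuousWithinAt)
    (fun s hs => (hX s (Ico_subset_Icc_self hs)).hasDerivWithinAt)
    (fun s hs => mem_image_of_mem u (hadd s (Ico_subset_Icc_self hs)))
    (fun s hs => (hY s hs).continuousAt.continuousWithinAt)
    (fun s hs => (hY s (Ico_subset_Icc_self hs)).hasDerivWithinAt)
    (fun s hs => mem_image_of_mem u (hsub s (Ico_subset_Icc_self hs)))
    (by simp [ha])
  exact congrArg Prod.fst (key (right_mem_Icc.2 hr))


/-- The Claim inside the proof of Lemma 2.3 of Li–Nirenberg: a positive solution of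
u'' = f(u) vanishing at 0 must be strictly increasing on the first half of its
interval of definition. -/
theorem stmt_19 (c : ℝ) (hc : 0 < c) (f : ℝ → ℝ)
    (hf : ∀ s : Set ℝ, s ⊆ Set.Ioi 0 → IsCompact s → ∃ L : NNReal, LipschitzOnWith L f s)
    (u : ℝ → ℝ)
    (hu1 : ContDiffOn ℝ 1 u (Set.Ico 0 c))
    (hupos : ∀ t ∈ Set.Ioo 0 c, 0 < u t)
    (hu0 : u 0 = 0)
    (hueq : ∀ t ∈ Set.Ioo 0 c, HasDerivAt (deriv u) (f (u t)) t) :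
    ∀ t ∈ Set.Ioo 0 (c / 2), 0 < deriv u t := by
  have hcont : ContinuousOn u (Set.Ico 0 c) := hu1.continuousOn
  have hderiv : ∀ t ∈ Set.Ioo 0 c, HasDerivAt u (deriv u t) t := fun t ht =>
    ((hu1.differentiableOn one_ne_zero).differentiableAt (Ico_mem_nhds ht.1 ht.2)).hasDerivAt
  have hne : ∀ a ∈ Set.Ioo 0 (c / 2), deriv u a ≠ 0 := by
    intro a ⟨ha0, hac⟩ ha
    have hsymm : Set.EqOn (fun r => u (a + r)) (fun r => u (a - r)) (Set.Ico 0 a) := by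
      intro r ⟨hr0, hra⟩
      have hsub : Set.Icc (a - r) (a + r) ⊆ Set.Ioo 0 c := fun t ht =>
        ⟨by linarith [ht.1], by linarith [ht.2]⟩
      obtain ⟨L, hL⟩ := hf (u '' Set.Icc (a - r) (a + r))
        (Set.image_subset_iff.2 fun t ht => hupos t (hsub ht))
        (isCompact_Icc.image_of_continuousOn
          (hcont.mono (hsub.trans Set.Ioo_subset_Ico_self)))
      exact eq_reflection_of_deriv_eq_zero hr0 hL (fun t ht => hderiv t (hsub ht))
        (fun t ht => hueq t (hsub ht)) ha
    have hend : u (a + a) = u (a - a) := by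
      refine hsymm.of_subset_closure (t := Set.Icc 0 a) ?_ ?_ Set.Ico_subset_Icc_self
        (closure_Ico ha0.ne).ge (Set.right_mem_Icc.2 ha0.le)
      · exact hcont.comp (by fun_prop) fun r hr => ⟨by linarith [hr.1], by linarith [hr.2]⟩
      · exact hcont.comp (by fun_prop) fun r hr => ⟨by linarith [hr.2], by linarith [hr.1]⟩
    rw [sub_self, hu0] at hend
    exact (hupos (a + a) ⟨by linarith, by linarith⟩).ne' hend
  intro t ⟨ht0, htc⟩
  by_contra! hneg
  obtain ⟨s, ⟨hs0, hst⟩, hs⟩ := exists_hasDerivAt_eq_slope u (deriv u) ht0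
    (hcont.mono fun x hx => ⟨hx.1, by linarith [hx.2]⟩)
    fun x hx => hderiv x ⟨hx.1, by linarith [hx.2]⟩
  have hspos : 0 < deriv u s := by
    rw [hs, hu0, sub_zero, sub_zero]
    exact div_pos (hupos t ⟨ht0, by linarith⟩) ht0
  obtain ⟨a, ha, hazero⟩ := intermediate_value_Icc' hst.le
    (fun x hx => (hueq x ⟨by linarith [hx.1], by linarith [hx.2]⟩).continuousAt.continuousWithinAt)
    ⟨hneg, hspos.le⟩
  exact hne a ⟨by linarith [ha.1], by linarith [ha.2]⟩ hazero
end
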